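/- arXiv:1507.03099 — 2 statements merged into one kernel-verified Lean document; each statement's English description precedes it below -/
import Mathlib

section
/- Let p be a prime with p ≡ 2 (mod 3), and let k, n be nonnegative integers. Then (p²−1)·A_3(p^{2k}·n + (2p^{2k} − 2)/3) + (p^{2k} − p²)·A_3(n) = (p^{2k} − 1)·A_3(p²·n + (2p² − 2)/3). (Here (2p^{2k} − 2)/3 and (2p² − 2)/3 are integers since p² ≡ 1 (mod 3).) -/
/-- The hook length of the cell `(i, j)` in a Young diagram `μ`:
arm length + leg length + 1. -/
def YoungDiagram.hookLength (μ : YoungDiagram) (i j : ℕ) : ℕ :=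
  μ.rowLen i + μ.colLen j - i - j - 1

/-- A Young diagram (equivalently, a partition) is a 3-core if none of its
hook numbers is divisible by 3. -/
def YoungDiagram.IsThreeCore (μ : YoungDiagram) : Prop :=
  ∀ c ∈ μ.cells, ¬ (3 ∣ μ.hookLength c.1 c.2)

/-- `a3 n` is the number of 3-core partitions of `n`. -/
noncomputable def a3 (n : ℕ) : ℕ :=
  Nat.card {μ : YoungDiagram // μ.card = n ∧ μ.IsThreeCore}

/-- `A3 n` is the number of partition pairs of `n` in which each partition is a 3-core. -/
noncomputable def A3 (n : ℕ) : ℕ :=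
  Nat.card {p : YoungDiagram × YoungDiagram //
    p.1.card + p.2.card = n ∧ p.1.IsThreeCore ∧ p.2.IsThreeCore}

/-- `B3 n` is the number of partition triples of `n` in which each partition is a 3-core. -/
noncomputable def B3 (n : ℕ) : ℕ :=
  Nat.card {p : YoungDiagram × YoungDiagram × YoungDiagram //
    p.1.card + p.2.1.card + p.2.2.card = n ∧
    p.1.IsThreeCore ∧ p.2.1.IsThreeCore ∧ p.2.2.IsThreeCore}


def chi3 (n : ℕ) : ℤ := if n % 3 = 1 then 1 else if n % 3 = 2 then -1 else 0

lemma chi3_mul (a b : ℕ) : chi3 (a * b) = chi3 a * chi3 b := by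
  unfold chi3
  rw [Nat.mul_mod]
  have ha : a % 3 < 3 := Nat.mod_lt _ (by norm_num)
  have hb : b % 3 < 3 := Nat.mod_lt _ (by norm_num)
  interval_cases a % 3 <;> interval_cases b % 3 <;> simp

def T3 (M : ℕ) : Finset (ℕ × ℕ × ℕ × ℕ) :=
  ((Finset.Icc 1 M) ×ˢ (Finset.Icc 1 M) ×ˢ (Finset.Icc 1 M) ×ˢ (Finset.Icc 1 M)).filter
    (fun t => t.1 * t.2.1 + t.2.2.1 * t.2.2.2 = M)

lemma mem_T3 (M a x b y : ℕ) :
    (a, x, b, y) ∈ T3 M ↔ 0 < a ∧ 0 < x ∧ 0 < b ∧ 0 < y ∧ a * x + b * y = M := by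
  simp only [T3, Finset.mem_filter, Finset.mem_product, Finset.mem_Icc]
  constructor
  · rintro ⟨⟨⟨h1, -⟩, ⟨h2, -⟩, ⟨h3, -⟩, ⟨h4, -⟩⟩, h⟩
    exact ⟨h1, h2, h3, h4, h⟩
  · rintro ⟨h1, h2, h3, h4, h⟩
    refine ⟨⟨⟨h1, ?_⟩, ⟨h2, ?_⟩, ⟨h3, ?_⟩, ⟨h4, ?_⟩⟩, h⟩ <;> nlinarith

def S1 (M : ℕ) := (T3 M).filter
  (fun t => t.1 % 3 ≠ 0 ∧ t.2.1 % 3 = t.1 % 3 ∧ t.2.2.1 % 3 = t.1 % 3 ∧ t.2.2.2 % 3 = t.1 % 3)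
def S2 (M : ℕ) := (T3 M).filter
  (fun t => t.1 % 3 ≠ 0 ∧ t.2.1 % 3 = t.1 % 3 ∧ (t.2.2.1 + t.1) % 3 = 0 ∧
    t.2.2.2 % 3 = t.2.2.1 % 3)
def U3 (M : ℕ) := (T3 M).filter
  (fun t => t.1 % 3 = 0 ∧ t.2.1 % 3 ≠ 0 ∧ t.2.2.1 % 3 = t.2.1 % 3 ∧ (t.2.2.2 + t.2.1) % 3 = 0)

lemma S1_gt (M : ℕ) : ((S1 M).filter (fun t => t.2.2.1 < t.1)).card =
    ((U3 M).filter (fun t => t.2.1 < t.2.2.2)).card := by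
  refine Finset.card_nbij' (fun t => (t.1 - t.2.2.1, t.2.1, t.2.2.1, t.2.1 + t.2.2.2))
    (fun t => (t.1 + t.2.2.1, t.2.1, t.2.2.1, t.2.2.2 - t.2.1)) ?_ ?_ ?_ ?_
  · rintro ⟨a, x, b, y⟩ h
    simp only [S1, U3, Finset.coe_filter, Finset.mem_filter, Set.mem_ofPred_eq, mem_T3] at h ⊢
    obtain ⟨⟨⟨h1, h2, h3, h4, h⟩, h5⟩, h6⟩ := h
    obtain ⟨c, rfl⟩ := Nat.exists_eq_add_of_lt h6
    have : b + c + 1 - b = c + 1 := by omega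
    rw [this]
    refine ⟨⟨⟨by omega, by omega, by omega, by omega, by linarith⟩, by omega⟩, by omega⟩
  · rintro ⟨a, x, b, y⟩ h
    simp only [S1, U3, Finset.coe_filter, Finset.mem_filter, Set.mem_ofPred_eq, mem_T3] at h ⊢
    obtain ⟨⟨⟨h1, h2, h3, h4, h⟩, h5⟩, h6⟩ := h
    obtain ⟨c, rfl⟩ := Nat.exists_eq_add_of_lt h6
    have : x + c + 1 - x = c + 1 := by omega
    rw [this]
    refine ⟨⟨⟨by omega, by omega, by omega, by omega, by linarith⟩, by omega⟩, by omega⟩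
  · rintro ⟨a, x, b, y⟩ h
    simp only [S1, U3, Finset.coe_filter, Finset.mem_filter, Set.mem_ofPred_eq, mem_T3] at h ⊢
    simp only [Prod.mk.injEq]
    obtain ⟨⟨⟨h1, h2, h3, h4, h⟩, h5⟩, h6⟩ := h
    refine ⟨?_, ?_, ?_, ?_⟩ <;> first | trivial | omega
  · rintro ⟨a, x, b, y⟩ h
    simp only [S1, U3, Finset.coe_filter, Finset.mem_filter, Set.mem_ofPred_eq, mem_T3] at h ⊢
    simp only [Prod.mk.injEq]
    obtain ⟨⟨⟨h1, h2, h3, h4, h⟩, h5⟩, h6⟩ := h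
    refine ⟨?_, ?_, ?_, ?_⟩ <;> first | trivial | omega

lemma S2_gt (M : ℕ) : ((S2 M).filter (fun t => t.2.2.1 < t.1)).card =
    ((U3 M).filter (fun t => t.2.2.2 < t.1)).card := by
  refine Finset.card_nbij' (fun t => (t.2.1 + t.2.2.2, t.2.2.1, t.1 - t.2.2.1, t.2.1))
    (fun t => (t.2.2.1 + t.2.1, t.2.2.2, t.2.1, t.1 - t.2.2.2)) ?_ ?_ ?_ ?_
  · rintro ⟨a, x, b, y⟩ h
    simp only [S2, U3, Finset.coe_filter, Finset.mem_filter, Set.mem_ofPred_eq, mem_T3] at h ⊢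
    obtain ⟨⟨⟨h1, h2, h3, h4, h⟩, h5⟩, h6⟩ := h
    obtain ⟨c, rfl⟩ := Nat.exists_eq_add_of_lt h6
    have : b + c + 1 - b = c + 1 := by omega
    rw [this]
    refine ⟨⟨⟨by omega, by omega, by omega, by omega, by linarith⟩, by omega⟩, by omega⟩
  · rintro ⟨a, x, b, y⟩ h
    simp only [S2, U3, Finset.coe_filter, Finset.mem_filter, Set.mem_ofPred_eq, mem_T3] at h ⊢
    obtain ⟨⟨⟨h1, h2, h3, h4, h⟩, h5⟩, h6⟩ := h
    obtain ⟨c, rfl⟩ := Nat.exists_eq_add_of_lt h6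
    have : y + c + 1 - y = c + 1 := by omega
    rw [this]
    refine ⟨⟨⟨by omega, by omega, by omega, by omega, by linarith⟩, by omega⟩, by omega⟩
  · rintro ⟨a, x, b, y⟩ h
    simp only [S2, U3, Finset.coe_filter, Finset.mem_filter, Set.mem_ofPred_eq, mem_T3] at h ⊢
    simp only [Prod.mk.injEq]
    obtain ⟨⟨⟨h1, h2, h3, h4, h⟩, h5⟩, h6⟩ := h
    refine ⟨?_, ?_, ?_, ?_⟩ <;> first | trivial | omega
  · rintro ⟨a, x, b, y⟩ h
    simp only [S2, U3, Finset.coe_filter, Finset.mem_filter, Set.mem_ofPred_eq, mem_T3] at h ⊢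
    simp only [Prod.mk.injEq]
    obtain ⟨⟨⟨h1, h2, h3, h4, h⟩, h5⟩, h6⟩ := h
    refine ⟨?_, ?_, ?_, ?_⟩ <;> first | trivial | omega

lemma U3_bij (M : ℕ) : ((U3 M).filter (fun t => t.2.2.2 < t.2.1)).card =
    ((U3 M).filter (fun t => t.1 < t.2.2.2)).card := by
  refine Finset.card_nbij' (fun t => (t.1, t.2.1 - t.2.2.2, t.2.2.2, t.1 + t.2.2.1))
    (fun t => (t.1, t.2.1 + t.2.2.1, t.2.2.2 - t.1, t.2.2.1)) ?_ ?_ ?_ ?_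
  · rintro ⟨a, x, b, y⟩ h
    simp only [U3, Finset.coe_filter, Finset.mem_filter, Set.mem_ofPred_eq, mem_T3] at h ⊢
    obtain ⟨⟨⟨h1, h2, h3, h4, h⟩, h5⟩, h6⟩ := h
    obtain ⟨c, rfl⟩ := Nat.exists_eq_add_of_lt h6
    have : y + c + 1 - y = c + 1 := by omega
    rw [this]
    refine ⟨⟨⟨by omega, by omega, by omega, by omega, by linarith⟩, by omega⟩, by omega⟩
  · rintro ⟨a, x, b, y⟩ h
    simp only [U3, Finset.coe_filter, Finset.mem_filter, Set.mem_ofPred_eq, mem_T3] at h ⊢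
    obtain ⟨⟨⟨h1, h2, h3, h4, h⟩, h5⟩, h6⟩ := h
    obtain ⟨c, rfl⟩ := Nat.exists_eq_add_of_lt h6
    have : a + c + 1 - a = c + 1 := by omega
    rw [this]
    refine ⟨⟨⟨by omega, by omega, by omega, by omega, by linarith⟩, by omega⟩, by omega⟩
  · rintro ⟨a, x, b, y⟩ h
    simp only [U3, Finset.coe_filter, Finset.mem_filter, Set.mem_ofPred_eq, mem_T3] at h ⊢
    simp only [Prod.mk.injEq]
    obtain ⟨⟨⟨h1, h2, h3, h4, h⟩, h5⟩, h6⟩ := h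
    refine ⟨?_, ?_, ?_, ?_⟩ <;> first | trivial | omega
  · rintro ⟨a, x, b, y⟩ h
    simp only [U3, Finset.coe_filter, Finset.mem_filter, Set.mem_ofPred_eq, mem_T3] at h ⊢
    simp only [Prod.mk.injEq]
    obtain ⟨⟨⟨h1, h2, h3, h4, h⟩, h5⟩, h6⟩ := h
    refine ⟨?_, ?_, ?_, ?_⟩ <;> first | trivial | omega

lemma S1_swap (M : ℕ) : ((S1 M).filter (fun t => t.1 < t.2.2.1)).card =
    ((S1 M).filter (fun t => t.2.2.1 < t.1)).card := by
  refine Finset.card_nbij' (fun t => (t.2.2.1, t.2.2.2, t.1, t.2.1))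
    (fun t => (t.2.2.1, t.2.2.2, t.1, t.2.1)) ?_ ?_ ?_ ?_
  · rintro ⟨a, x, b, y⟩ h
    simp only [S1, Finset.coe_filter, Finset.mem_filter, Set.mem_ofPred_eq, mem_T3] at h ⊢
    omega
  · rintro ⟨a, x, b, y⟩ h
    simp only [S1, Finset.coe_filter, Finset.mem_filter, Set.mem_ofPred_eq, mem_T3] at h ⊢
    omega
  · rintro ⟨a, x, b, y⟩ h
    rfl
  · rintro ⟨a, x, b, y⟩ h
    rfl

lemma S2_swap (M : ℕ) : ((S2 M).filter (fun t => t.1 < t.2.2.1)).card =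
    ((S2 M).filter (fun t => t.2.2.1 < t.1)).card := by
  refine Finset.card_nbij' (fun t => (t.2.2.1, t.2.2.2, t.1, t.2.1))
    (fun t => (t.2.2.1, t.2.2.2, t.1, t.2.1)) ?_ ?_ ?_ ?_
  · rintro ⟨a, x, b, y⟩ h
    simp only [S2, Finset.coe_filter, Finset.mem_filter, Set.mem_ofPred_eq, mem_T3] at h ⊢
    omega
  · rintro ⟨a, x, b, y⟩ h
    simp only [S2, Finset.coe_filter, Finset.mem_filter, Set.mem_ofPred_eq, mem_T3] at h ⊢
    omega
  · rintro ⟨a, x, b, y⟩ h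
    rfl
  · rintro ⟨a, x, b, y⟩ h
    rfl

lemma card_split3 {α : Type*} (s : Finset α) (u v : α → ℕ) :
    s.card = (s.filter (fun t => u t < v t)).card + (s.filter (fun t => v t < u t)).card
      + (s.filter (fun t => u t = v t)).card := by
  classical
  rw [← Finset.card_filter_add_card_filter_not (s := s) (fun t => u t < v t),
    ← Finset.card_filter_add_card_filter_not
      (s := s.filter (fun t => ¬ u t < v t)) (fun t => v t < u t), Finset.filter_filter,
      Finset.filter_filter, ← add_assoc]
  congr 1
  congr 1
  · congr 1; ext t; simp only [Finset.mem_filter]; refine and_congr_right (fun _ => ?_); omega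
  · congr 1; ext t; simp only [Finset.mem_filter]; refine and_congr_right (fun _ => ?_); omega

lemma S1_sub_S2 (M : ℕ) : (S1 M).card =
    (S2 M).card + ((S1 M).filter (fun t => t.1 = t.2.2.1)).card := by
  have h1 := card_split3 (S1 M) (fun t => t.1) (fun t => t.2.2.1)
  have h2 := card_split3 (S2 M) (fun t => t.1) (fun t => t.2.2.1)
  have h3 := card_split3 (U3 M) (fun t => t.2.1) (fun t => t.2.2.2)
  have h4 := card_split3 (U3 M) (fun t => t.1) (fun t => t.2.2.2)
  have e2 : ((S2 M).filter (fun t => t.1 = t.2.2.1)).card = 0 := by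
    rw [Finset.card_eq_zero, Finset.filter_eq_empty_iff]
    rintro ⟨a, x, b, y⟩ h
    simp only [S2, Finset.mem_filter] at h ⊢; omega
  have e3 : ((U3 M).filter (fun t => t.2.1 = t.2.2.2)).card = 0 := by
    rw [Finset.card_eq_zero, Finset.filter_eq_empty_iff]
    rintro ⟨a, x, b, y⟩ h
    simp only [U3, Finset.mem_filter] at h ⊢; omega
  have e4 : ((U3 M).filter (fun t => t.1 = t.2.2.2)).card = 0 := by
    rw [Finset.card_eq_zero, Finset.filter_eq_empty_iff]
    rintro ⟨a, x, b, y⟩ h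
    simp only [U3, Finset.mem_filter] at h ⊢; omega
  have := S1_gt M
  have := S2_gt M
  have := U3_bij M
  have := S1_swap M
  have := S2_swap M
  omega

lemma count_mod (a t : ℕ) (h : a * t % 3 = 2) :
    3 * (((Finset.range t).filter (fun x => x % 3 = a % 3)).card : ℤ) = t - chi3 t := by
  have key : ∀ c m, ((Finset.range t).filter (fun x => x % 3 = a % 3)) =
      (Finset.range m).image (fun i => 3 * i + c) → ((Finset.range t).filter (fun x => x % 3 = a % 3)).card = m := by
    intro c m h
    rw [h, Finset.card_image_of_injective, Finset.card_range]
    intro x y hxy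
    simp only at hxy
    omega
  rw [Nat.mul_mod] at h
  have ha : a % 3 < 3 := Nat.mod_lt _ (by norm_num)
  have ht : t % 3 < 3 := Nat.mod_lt _ (by norm_num)
  have hcase : (a % 3 = 1 ∧ t % 3 = 2) ∨ (a % 3 = 2 ∧ t % 3 = 1) := by
    generalize a % 3 = a' at *
    generalize t % 3 = t' at *
    interval_cases a' <;> interval_cases t' <;> simp at h ⊢
  rcases hcase with ⟨h1, h2⟩ | ⟨h1, h2⟩
  · rw [key 1 ((t + 1) / 3)]
    · simp [chi3, h2]; omega
    · ext x
      simp only [Finset.mem_filter, Finset.mem_range, Finset.mem_image]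
      constructor
      · rintro ⟨h3, h4⟩; exact ⟨x / 3, by omega, by omega⟩
      · rintro ⟨i, h3, h4⟩; omega
  · rw [key 2 ((t - 1) / 3)]
    · simp [chi3, h2]; omega
    · ext x
      simp only [Finset.mem_filter, Finset.mem_range, Finset.mem_image]
      constructor
      · rintro ⟨h3, h4⟩; exact ⟨x / 3, by omega, by omega⟩
      · rintro ⟨i, h3, h4⟩; omega

lemma S1_eq_card (M : ℕ) (hM : M % 3 = 2) :
    ((S1 M).filter (fun t => t.1 = t.2.2.1)).card =
    ∑ p ∈ M.divisorsAntidiagonal, ((Finset.range p.2).filter (fun x => x % 3 = p.1 % 3)).card := by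
  rw [← Finset.card_sigma]
  refine Finset.card_nbij' (fun t => ⟨(t.1, t.2.1 + t.2.2.2), t.2.1⟩)
    (fun s => (s.1.1, s.2, s.1.1, s.1.2 - s.2)) ?_ ?_ ?_ ?_
  · rintro ⟨a, x, b, y⟩ h
    simp only [S1, Finset.coe_filter, Finset.mem_filter, Set.mem_ofPred_eq, mem_T3] at h
    simp only [Finset.coe_sigma, Set.mem_sigma_iff, Finset.mem_coe, Nat.mem_divisorsAntidiagonal, Finset.mem_filter, Finset.mem_range]
    obtain ⟨⟨⟨h1, h2, h3, h4, h⟩, h5⟩, rfl⟩ := h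
    exact ⟨⟨by linarith, by omega⟩, by omega, by omega⟩
  · rintro ⟨⟨a, t⟩, x⟩ h
    simp only [Finset.coe_sigma, Set.mem_sigma_iff, Finset.mem_coe, Nat.mem_divisorsAntidiagonal, Finset.mem_filter, Finset.mem_range] at h
    simp only [S1, Finset.coe_filter, Finset.mem_filter, Set.mem_ofPred_eq, mem_T3]
    obtain ⟨⟨h1, h2⟩, h3, h4⟩ := h
    obtain ⟨y, rfl⟩ := Nat.exists_eq_add_of_lt h3
    have h5 : x + y + 1 - x = y + 1 := by omega
    rw [h5]
    have ha : a % 3 < 3 := Nat.mod_lt _ (by norm_num)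
    have ht : (x + y + 1) % 3 < 3 := Nat.mod_lt _ (by norm_num)
    have h0 : 0 < a := Nat.pos_of_ne_zero (by rintro rfl; simp at h1; omega)
    have h6 : (a % 3) * ((x + y + 1) % 3) % 3 = 2 := by rw [← Nat.mul_mod, h1, hM]
    have hcase : (a % 3 = 1 ∧ (x + y + 1) % 3 = 2) ∨ (a % 3 = 2 ∧ (x + y + 1) % 3 = 1) := by
      generalize a % 3 = a' at *
      generalize (x + y + 1) % 3 = t' at *
      interval_cases a' <;> interval_cases t' <;> simp at h6 ⊢
    refine ⟨⟨⟨h0, Nat.pos_of_ne_zero (by rintro rfl; revert h4; clear h6; omega), h0, by omega, by linarith⟩,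
      by refine ⟨?_, ?_, ?_, ?_⟩ <;> first | trivial | omega⟩, trivial⟩
  · rintro ⟨a, x, b, y⟩ h
    simp only [S1, Finset.coe_filter, Finset.mem_filter, Set.mem_ofPred_eq, mem_T3] at h
    simp only [Prod.mk.injEq]
    obtain ⟨⟨⟨h1, h2, h3, h4, h⟩, h5⟩, h6⟩ := h
    refine ⟨?_, ?_, ?_, ?_⟩ <;> first | trivial | omega
  · rintro ⟨⟨a, t⟩, x⟩ h
    simp only [Finset.coe_sigma, Set.mem_sigma_iff, Finset.mem_coe, Nat.mem_divisorsAntidiagonal, Finset.mem_filter, Finset.mem_range] at h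
    have : x + (t - x) = t := by omega
    simp only [this]

lemma sum_chi_zero (M : ℕ) (hM : M % 3 = 2) :
    ∑ p ∈ M.divisorsAntidiagonal, chi3 p.2 = 0 := by
  have h1 : ∑ p ∈ M.divisorsAntidiagonal, chi3 p.2 = ∑ p ∈ M.divisorsAntidiagonal, chi3 p.1 := by
    conv_lhs => rw [← Nat.map_swap_divisorsAntidiagonal, Finset.sum_map]
    rfl
  have h2 : ∑ p ∈ M.divisorsAntidiagonal, chi3 p.2 = - ∑ p ∈ M.divisorsAntidiagonal, chi3 p.1 := by
    rw [← Finset.sum_neg_distrib]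
    refine Finset.sum_congr rfl ?_
    rintro ⟨a, t⟩ h
    have h3 : chi3 a * chi3 t = -1 := by
      rw [← chi3_mul, (Nat.mem_divisorsAntidiagonal.1 h).1]; simp [chi3, hM]
    simp only
    unfold chi3 at *
    split_ifs at * <;> simp_all
  omega

lemma S1_eq_sigma (M : ℕ) (hM : M % 3 = 2) :
    3 * (((S1 M).filter (fun t => t.1 = t.2.2.1)).card : ℤ) = ∑ d ∈ M.divisors, (d : ℤ) := by
  rw [S1_eq_card M hM]
  push_cast
  rw [Finset.mul_sum]
  have : ∀ p ∈ M.divisorsAntidiagonal, 3 * (((Finset.range p.2).filter (fun x => x % 3 = p.1 % 3)).card : ℤ) = (p.2 : ℤ) - chi3 p.2 := by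
    intro p hp
    exact count_mod _ _ (by rw [(Nat.mem_divisorsAntidiagonal.1 hp).1, hM])
  rw [Finset.sum_congr rfl this, Finset.sum_sub_distrib, sum_chi_zero M hM, sub_zero]
  rw [← Nat.image_snd_divisorsAntidiagonal, Finset.sum_image]
  rintro ⟨a, b⟩ h ⟨c, d⟩ h' e
  simp only [Finset.mem_coe, Nat.mem_divisorsAntidiagonal] at h h' e
  subst e
  have : 0 < b := Nat.pos_of_ne_zero (by rintro rfl; simp at h; omega)
  have := Nat.eq_of_mul_eq_mul_right this (h.1.trans h'.1.symm)
  simp [this]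


def f3 (n : ℕ) : ℤ := ∑ p ∈ n.divisorsAntidiagonal, chi3 p.1

lemma f3_conv1 (n : ℕ) :
    ∑ p ∈ Finset.HasAntidiagonal.antidiagonal n, f3 (3 * p.1 + 1) * f3 (3 * p.2 + 1) =
    ∑ t ∈ (T3 (3 * n + 2)).filter (fun t => t.1 * t.2.1 % 3 = 1 ∧ t.2.2.1 * t.2.2.2 % 3 = 1),
      chi3 t.1 * chi3 t.2.2.1 := by
  simp only [f3, Finset.sum_mul_sum]
  simp only [← Finset.sum_product']
  rw [Finset.sum_sigma']
  refine Finset.sum_nbij' (fun s => (s.2.1.1, s.2.1.2, s.2.2.1, s.2.2.2))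
    (fun t => ⟨((t.1 * t.2.1) / 3, (t.2.2.1 * t.2.2.2) / 3), ((t.1, t.2.1), (t.2.2.1, t.2.2.2))⟩)
    ?_ ?_ ?_ ?_ ?_
  · rintro ⟨⟨i, j⟩, ⟨⟨a, x⟩, ⟨b, y⟩⟩⟩ h
    simp only [Finset.mem_sigma, Finset.mem_product, Nat.mem_divisorsAntidiagonal,
      Finset.HasAntidiagonal.mem_antidiagonal] at h
    simp only [Finset.mem_filter, mem_T3]
    obtain ⟨h0, ⟨h1, -⟩, ⟨h2, -⟩⟩ := h
    have e : ∀ u v w : ℕ, u * v = 3 * w + 1 → 0 < u ∧ 0 < v := by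
      intro u v w h
      constructor <;> refine Nat.pos_of_ne_zero ?_ <;> rintro rfl <;> simp at h
    exact ⟨⟨(e _ _ _ h1).1, (e _ _ _ h1).2, (e _ _ _ h2).1, (e _ _ _ h2).2, by omega⟩,
      by omega, by omega⟩
  · rintro ⟨a, x, b, y⟩ h
    simp only [Finset.mem_filter, mem_T3] at h
    simp only [Finset.mem_sigma, Finset.mem_product, Nat.mem_divisorsAntidiagonal,
      Finset.HasAntidiagonal.mem_antidiagonal]
    obtain ⟨⟨h1, h2, h3, h4, h⟩, h5, h6⟩ := h
    refine ⟨?_, ⟨?_, ?_⟩, ?_, ?_⟩ <;> omega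
  · rintro ⟨⟨i, j⟩, ⟨⟨a, x⟩, ⟨b, y⟩⟩⟩ h
    simp only [Finset.mem_sigma, Finset.mem_product, Nat.mem_divisorsAntidiagonal,
      Finset.HasAntidiagonal.mem_antidiagonal] at h
    obtain ⟨h0, ⟨h1, -⟩, ⟨h2, -⟩⟩ := h
    have e1 : a * x / 3 = i := by omega
    have e2 : b * y / 3 = j := by omega
    simp only [e1, e2]
  · rintro ⟨a, x, b, y⟩ h
    rfl
  · rintro ⟨⟨i, j⟩, ⟨⟨a, x⟩, ⟨b, y⟩⟩⟩ h
    rfl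

lemma mul_mod_one (a x : ℕ) : a * x % 3 = 1 ↔ a % 3 ≠ 0 ∧ x % 3 = a % 3 := by
  rw [Nat.mul_mod]
  have ha : a % 3 < 3 := Nat.mod_lt _ (by norm_num)
  have hb : x % 3 < 3 := Nat.mod_lt _ (by norm_num)
  interval_cases a % 3 <;> interval_cases x % 3 <;> simp

lemma f3_conv2 (M : ℕ) :
    ∑ t ∈ (T3 M).filter (fun t => t.1 * t.2.1 % 3 = 1 ∧ t.2.2.1 * t.2.2.2 % 3 = 1),
      chi3 t.1 * chi3 t.2.2.1 = ((S1 M).card : ℤ) - (S2 M).card := by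
  simp only [mul_mod_one]
  rw [S1, S2, Finset.card_filter, Finset.card_filter, Finset.sum_filter]
  push_cast
  rw [← Finset.sum_sub_distrib]
  refine Finset.sum_congr rfl ?_
  rintro ⟨a, x, b, y⟩ -
  simp only [chi3]
  rw [Nat.add_mod b a]
  have ha : a % 3 < 3 := Nat.mod_lt _ (by norm_num)
  have hb : b % 3 < 3 := Nat.mod_lt _ (by norm_num)
  have hx : x % 3 < 3 := Nat.mod_lt _ (by norm_num)
  have hy : y % 3 < 3 := Nat.mod_lt _ (by norm_num)
  generalize a % 3 = a at *
  generalize b % 3 = b at *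
  generalize x % 3 = x at *
  generalize y % 3 = y at *
  clear M
  revert y x b a
  decide

lemma f3_conv (n : ℕ) :
    3 * ∑ p ∈ Finset.HasAntidiagonal.antidiagonal n, f3 (3 * p.1 + 1) * f3 (3 * p.2 + 1) =
    ∑ d ∈ (3 * n + 2).divisors, (d : ℤ) := by
  rw [f3_conv1, f3_conv2, S1_sub_S2, ← S1_eq_sigma _ (by omega)]
  push_cast
  ring


def R3 (m : ℕ) : Set (ℤ × ℤ) := {z | z.1 ^ 2 - z.1 * z.2 + z.2 ^ 2 = (m : ℤ)}

lemma mem_R3 (m : ℕ) (x y : ℤ) : (x, y) ∈ R3 m ↔ x ^ 2 - x * y + y ^ 2 = (m : ℤ) := Iff.rfl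

lemma R3_finite (m : ℕ) : (R3 m).Finite := by
  refine Set.Finite.subset (Set.finite_Icc ((-(2 * m : ℤ), -(2 * m : ℤ))) ((2 * m : ℤ), (2 * m : ℤ))) ?_
  rintro ⟨x, y⟩ h
  rw [mem_R3] at h
  have e : ∀ x y : ℤ, x ^ 2 - x * y + y ^ 2 = (m : ℤ) → -(2 * m : ℤ) ≤ x ∧ x ≤ 2 * m := by
    intro x y h
    have h1 : x ^ 2 ≤ 2 * m := by nlinarith [sq_nonneg (x - 2 * y), sq_nonneg x]
    have h2 : |x| ≤ x ^ 2 := by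
      rw [← sq_abs]; 
      rcases (abs_nonneg x).eq_or_lt with h | h
      · rw [← h]; simp
      · nlinarith
    exact abs_le.1 (h2.trans h1)
  have h1 := e x y h
  have h2 := e y x (by linarith)
  simp only [Set.mem_Icc, Prod.mk_le_mk]
  exact ⟨⟨h1.1, h2.1⟩, h1.2, h2.2⟩

lemma R3_one : (R3 1).ncard = 6 := by
  have : R3 1 = ((({(1, 0), (0, 1), (1, 1), (-1, 0), (0, -1), (-1, -1)} : Finset (ℤ × ℤ))) : Set (ℤ × ℤ)) := by
    ext ⟨x, y⟩
    rw [mem_R3]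
    simp only [Finset.coe_insert, Finset.coe_singleton, Set.mem_insert_iff, Set.mem_singleton_iff, Prod.mk.injEq]
    constructor
    · intro h
      push_cast at h
      have h1 : x ≤ 1 := by nlinarith [sq_nonneg (x - 2 * y)]
      have h2 : -1 ≤ x := by nlinarith [sq_nonneg (x - 2 * y)]
      have h3 : y ≤ 1 := by nlinarith [sq_nonneg (y - 2 * x)]
      have h4 : -1 ≤ y := by nlinarith [sq_nonneg (y - 2 * x)]
      interval_cases x <;> interval_cases y <;> simp_all
    · rintro (⟨rfl, rfl⟩ | ⟨rfl, rfl⟩ | ⟨rfl, rfl⟩ | ⟨rfl, rfl⟩ | ⟨rfl, rfl⟩ | ⟨rfl, rfl⟩) <;> norm_num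
  rw [this, Set.ncard_coe_finset]
  rfl

-- scaling by p
lemma R3_scale (p m : ℕ) (hp : 0 < p) :
    ((fun z : ℤ × ℤ => ((p : ℤ) * z.1, (p : ℤ) * z.2)) '' R3 m).ncard = (R3 m).ncard := by
  apply Set.ncard_image_of_injective
  rintro ⟨a, b⟩ ⟨c, d⟩ h
  have : (p : ℤ) ≠ 0 := by positivity
  simp only [Prod.mk.injEq, mul_eq_mul_left_iff, this, or_false] at h
  simp [h]

lemma inert_dvd (p : ℕ) (hp : p.Prime) (hp3 : p % 3 = 2) (x y : ℤ)
    (h : (p : ℤ) ∣ x ^ 2 - x * y + y ^ 2) : (p : ℤ) ∣ x ∧ (p : ℤ) ∣ y := by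
  haveI := Fact.mk hp
  have key : ∀ a b : ZMod p, a ^ 3 = b ^ 3 → a = b := by
    intro a b hab
    obtain ⟨k, hk⟩ : ∃ k, 3 * k = 1 + 2 * (p - 1) := ⟨(1 + 2 * (p - 1)) / 3, by
      have := hp.two_le; omega⟩
    have e : ∀ c : ZMod p, c = (c ^ 3) ^ k := by
      intro c
      rw [← pow_mul, hk, pow_add, mul_comm 2, pow_mul]
      by_cases hc : c = 0
      · simp [hc]
      · rw [ZMod.pow_card_sub_one_eq_one hc]; simp
    rw [e a, e b, hab]
  have h0 : ((x : ZMod p)) ^ 2 - x * y + y ^ 2 = 0 := by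
    have := (ZMod.intCast_zmod_eq_zero_iff_dvd _ p).2 h
    push_cast at this
    exact this
  have h1 : (x : ZMod p) = -y := key _ _ (by linear_combination (x + y : ZMod p) * h0)
  have h2 : (3 : ZMod p) * y ^ 2 = 0 := by rw [h1] at h0; linear_combination h0
  have h3 : (3 : ZMod p) ≠ 0 := by
    intro h3
    have : ((3 : ℕ) : ZMod p) = 0 := by exact_mod_cast h3
    rw [ZMod.natCast_eq_zero_iff] at this
    rw [Nat.prime_dvd_prime_iff_eq hp Nat.prime_three] at this
    omega
  have h4 : (y : ZMod p) = 0 := by simpa [h3] using h2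
  rw [h4, neg_zero] at h1
  exact ⟨(ZMod.intCast_zmod_eq_zero_iff_dvd _ p).1 h1, (ZMod.intCast_zmod_eq_zero_iff_dvd _ p).1 h4⟩

lemma R3_inert (p m : ℕ) (hp : p.Prime) (hp3 : p % 3 = 2) :
    (R3 (p * m)).ncard = if p ∣ m then (R3 (m / p)).ncard else 0 := by
  have hp0 : (p : ℤ) ≠ 0 := by exact_mod_cast hp.ne_zero
  split_ifs with h
  · obtain ⟨m, rfl⟩ := h
    rw [Nat.mul_div_cancel_left _ hp.pos, ← R3_scale p m hp.pos]
    congr 1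
    ext ⟨x, y⟩
    simp only [Set.mem_image, Prod.exists, mem_R3, Prod.mk.injEq]
    constructor
    · intro h
      obtain ⟨⟨a, rfl⟩, ⟨b, rfl⟩⟩ := inert_dvd p hp hp3 x y (by rw [h]; push_cast; exact dvd_mul_right _ _)
      refine ⟨a, b, ?_, rfl, rfl⟩
      have : (p : ℤ) ^ 2 ≠ 0 := by positivity
      apply mul_left_cancel₀ this
      push_cast at h
      linear_combination h
    · rintro ⟨a, b, h, rfl, rfl⟩
      push_cast
      linear_combination (p : ℤ) ^ 2 * h
  · rw [Set.ncard_eq_zero (R3_finite _), Set.eq_empty_iff_forall_notMem]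
    rintro ⟨x, y⟩ h'
    rw [mem_R3] at h'
    obtain ⟨⟨a, rfl⟩, ⟨b, rfl⟩⟩ := inert_dvd p hp hp3 x y (by rw [h']; push_cast; exact dvd_mul_right _ _)
    apply h
    rw [← Int.natCast_dvd_natCast]
    refine ⟨a ^ 2 - a * b + b ^ 2, ?_⟩
    apply mul_left_cancel₀ hp0
    push_cast at h'
    linear_combination -h'

lemma split_exists (p : ℕ) (hp : p.Prime) (hp3 : p % 3 = 1) :
    ∃ c d : ℤ, c ^ 2 - c * d + d ^ 2 = p := by
  haveI := Fact.mk hp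
  -- root of t^2 - t + 1
  obtain ⟨t, ht⟩ : ∃ t : ZMod p, t ^ 2 - t + 1 = 0 := by
    obtain ⟨g, hg⟩ := exists_prime_orderOf_dvd_card (G := (ZMod p)ˣ) 3 (by
      rw [ZMod.card_units]; have := hp.two_le; omega)
    have h3 : (g : ZMod p) ^ 3 = 1 := by
      have := pow_orderOf_eq_one g
      rw [hg] at this
      rw [← Units.val_pow_eq_pow_val, this, Units.val_one]
    have h1 : (g : ZMod p) - 1 ≠ 0 := by
      intro h
      have : g = 1 := Units.ext (by simpa using sub_eq_zero.1 h)
      rw [this] at hg; simp at hg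
    refine ⟨-g, mul_left_cancel₀ h1 ?_⟩
    linear_combination h3
  set s := Nat.sqrt p with hs
  have hs1 : p < (s + 1) * (s + 1) := Nat.lt_succ_sqrt p
  have hs2 : s * s ≤ p := Nat.sqrt_le p
  have hs3 : s * s ≠ p := fun h => by
    have := hp.prime.irreducible.isUnit_or_isUnit h.symm
    simp at this; rw [this] at h; simp at h; exact hp.one_lt.ne h
  obtain ⟨⟨a, b⟩, hu, ⟨a', b'⟩, hv, hne, he⟩ :=
    Finset.exists_ne_map_eq_of_card_lt_of_maps_to
    (s := (Finset.range (s + 1)) ×ˢ (Finset.range (s + 1))) (t := (Finset.univ : Finset (ZMod p)))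
    (f := fun u => (u.1 : ZMod p) - t * u.2)
    (by simpa [Finset.card_product, ZMod.card] using hs1) (by intro _ _; simp)
  simp only [Finset.mem_product, Finset.mem_range] at hu hv
  simp only at he
  set x : ℤ := (a : ℤ) - a' with hx
  set y : ℤ := (b : ℤ) - b' with hy
  have hx2 : x ^ 2 < p := by
    have : x ^ 2 ≤ (s : ℤ) ^ 2 := sq_le_sq' (by omega) (by omega)
    have h2 : (s : ℤ) * s < p := by exact_mod_cast lt_of_le_of_ne hs2 hs3
    nlinarith
  have hy2 : y ^ 2 < p := by
    have : y ^ 2 ≤ (s : ℤ) ^ 2 := sq_le_sq' (by omega) (by omega)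
    have h2 : (s : ℤ) * s < p := by exact_mod_cast lt_of_le_of_ne hs2 hs3
    nlinarith
  have hxy : x ≠ 0 ∨ y ≠ 0 := by
    by_contra! h
    apply hne
    simp only [Prod.mk.injEq]; omega
  have hd : (p : ℤ) ∣ x ^ 2 - x * y + y ^ 2 := by
    rw [← ZMod.intCast_zmod_eq_zero_iff_dvd]
    have h1 : (x : ZMod p) = t * y := by
      rw [hx, hy]; push_cast; linear_combination he
    push_cast
    rw [h1]
    linear_combination (y : ZMod p) ^ 2 * ht
  have hpos : 0 < x ^ 2 - x * y + y ^ 2 := by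
    rcases hxy with h | h
    · have := sq_pos_of_ne_zero h; nlinarith [sq_nonneg (x - 2 * y)]
    · have := sq_pos_of_ne_zero h; nlinarith [sq_nonneg (y - 2 * x)]
  have hlt : x ^ 2 - x * y + y ^ 2 < 3 * p := by
    nlinarith [sq_nonneg (x + y)]
  obtain ⟨k, hk⟩ := hd
  have hp0 : (0 : ℤ) < p := by exact_mod_cast hp.pos
  have hk1 : 0 < k := by
    by_contra! h; nlinarith
  have hk2 : k < 3 := by
    by_contra! h; nlinarith
  obtain rfl | rfl : k = 1 ∨ k = 2 := by omega
  · exact ⟨x, y, by rw [hk]; ring⟩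
  · exfalso
    have hodd : (p : ℤ) % 2 = 1 := by
      rcases hp.eq_two_or_odd with h | h
      · subst h; simp at hp3
      · omega
    have : x % 2 = 0 ∧ y % 2 = 0 := by
      have h2 : (x ^ 2 - x * y + y ^ 2) % 2 = 0 := by rw [hk]; omega
      rcases Int.emod_two_eq_zero_or_one x with h | h <;>
        rcases Int.emod_two_eq_zero_or_one y with h' | h' <;>
        simp [h, h', Int.sub_emod, Int.add_emod, Int.mul_emod, pow_two] at h2 ⊢
    obtain ⟨u, hu⟩ : (2 : ℤ) ∣ x := Int.dvd_of_emod_eq_zero this.1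
    obtain ⟨v, hv⟩ : (2 : ℤ) ∣ y := Int.dvd_of_emod_eq_zero this.2
    rw [hu, hv] at hk
    have : (p : ℤ) = 2 * (u ^ 2 - u * v + v ^ 2) := by linarith
    omega

lemma R3_split (p m : ℕ) (hp : p.Prime) (hp3 : p % 3 = 1) :
    (R3 (p * m)).ncard + (if p ∣ m then (R3 (m / p)).ncard else 0) = 2 * (R3 m).ncard := by
  obtain ⟨c, d, hcd⟩ := split_exists p hp hp3
  have hp0 : (p : ℤ) ≠ 0 := by exact_mod_cast hp.ne_zero
  have hpp : Prime (p : ℤ) := Nat.prime_iff_prime_int.1 hp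
  have hnd : ∀ u v : ℤ, u ^ 2 - u * v + v ^ 2 = p → ¬ (p : ℤ) ∣ v := by
    rintro u v h ⟨w, rfl⟩
    have : (p : ℤ) ∣ u := hpp.dvd_of_dvd_pow (n := 2) ⟨1 + u * w - p * w ^ 2, by linear_combination h⟩
    obtain ⟨w', rfl⟩ := this
    have : (p : ℤ) * (w' ^ 2 - w' * w + w ^ 2) = 1 := by
      apply mul_left_cancel₀ hp0; linear_combination h
    exact hpp.not_isUnit (IsUnit.of_mul_eq_one _ this)
  set F : ℤ × ℤ → ℤ × ℤ := fun z => (z.1 * c - z.2 * d, z.1 * d + z.2 * c - z.2 * d) with hF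
  set G : ℤ × ℤ → ℤ × ℤ := fun z => (z.1 * c - z.1 * d + z.2 * d, z.2 * c - z.1 * d) with hG
  have hGF : ∀ z, G (F z) = ((p : ℤ) * z.1, (p : ℤ) * z.2) := by
    rintro ⟨x, y⟩
    simp only [hF, hG, Prod.mk.injEq]
    constructor
    · linear_combination x * hcd
    · linear_combination y * hcd
  have hFG : ∀ z, F (G z) = ((p : ℤ) * z.1, (p : ℤ) * z.2) := by
    rintro ⟨x, y⟩
    simp only [hF, hG, Prod.mk.injEq]
    constructor
    · linear_combination x * hcd
    · linear_combination y * hcd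
  have hinj : Function.Injective (fun z : ℤ × ℤ => ((p : ℤ) * z.1, (p : ℤ) * z.2)) := by
    rintro ⟨a, b⟩ ⟨c, d⟩ h
    simp only [Prod.mk.injEq, mul_eq_mul_left_iff, hp0, or_false] at h
    simp [h]
  have hFi : Function.Injective F := by
    intro z w h; apply hinj; simp only [← hGF, h]
  have hGi : Function.Injective G := by
    intro z w h; apply hinj; simp only [← hFG, h]
  have hFn : ∀ x y : ℤ, (F (x, y)).1 ^ 2 - (F (x, y)).1 * (F (x, y)).2 + (F (x, y)).2 ^ 2 = p * (x ^ 2 - x * y + y ^ 2) := by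
    intro x y; simp only [hF]; linear_combination (x ^ 2 - x * y + y ^ 2) * hcd
  have hGn : ∀ x y : ℤ, (G (x, y)).1 ^ 2 - (G (x, y)).1 * (G (x, y)).2 + (G (x, y)).2 ^ 2 = p * (x ^ 2 - x * y + y ^ 2) := by
    intro x y; simp only [hG]; linear_combination (x ^ 2 - x * y + y ^ 2) * hcd
  -- divisibility gives membership
  have hdiv : ∀ A B K : ℤ, A ^ 2 - A * B + B ^ 2 = p * K → (p : ℤ) ∣ B → (p : ℤ) ∣ A := by
    rintro A B K h ⟨w, rfl⟩
    exact hpp.dvd_of_dvd_pow (n := 2) ⟨K + A * w - p * w ^ 2, by linear_combination h⟩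
  have hFim : ∀ x y : ℤ, (x, y) ∈ F '' R3 m ↔ (x, y) ∈ R3 (p * m) ∧ (p : ℤ) ∣ (G (x, y)).2 := by
    intro x y
    constructor
    · rintro ⟨⟨u, v⟩, h, h'⟩
      rw [mem_R3] at h
      refine ⟨?_, ?_⟩
      · rw [← h']; change _ = _; rw [hFn, h]; push_cast; ring
      · rw [← h', hGF]; exact dvd_mul_right _ _
    · rintro ⟨h, h2⟩
      rw [mem_R3] at h
      have h1 := hdiv _ _ _ (hGn x y) h2
      obtain ⟨u, hu⟩ := h1
      obtain ⟨v, hv⟩ := h2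
      have hz : F (u, v) = (x, y) := by
        apply hGi; rw [hGF]; exact Prod.ext hu.symm hv.symm
      refine ⟨(u, v), ?_, hz⟩
      rw [mem_R3]
      have := hFn u v
      rw [hz] at this
      apply mul_left_cancel₀ hp0
      rw [← this]; simp only; rw [h]; push_cast; ring
  have hGim : ∀ x y : ℤ, (x, y) ∈ G '' R3 m ↔ (x, y) ∈ R3 (p * m) ∧ (p : ℤ) ∣ (F (x, y)).2 := by
    intro x y
    constructor
    · rintro ⟨⟨u, v⟩, h, h'⟩
      rw [mem_R3] at h
      refine ⟨?_, ?_⟩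
      · rw [← h']; change _ = _; rw [hGn, h]; push_cast; ring
      · rw [← h', hFG]; exact dvd_mul_right _ _
    · rintro ⟨h, h2⟩
      rw [mem_R3] at h
      have h1 := hdiv _ _ _ (hFn x y) h2
      obtain ⟨u, hu⟩ := h1
      obtain ⟨v, hv⟩ := h2
      have hz : G (u, v) = (x, y) := by
        apply hFi; rw [hFG]; exact Prod.ext hu.symm hv.symm
      refine ⟨(u, v), ?_, hz⟩
      rw [mem_R3]
      have := hGn u v
      rw [hz] at this
      apply mul_left_cancel₀ hp0
      rw [← this]; simp only; rw [h]; push_cast; ring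
  have hunion : F '' R3 m ∪ G '' R3 m = R3 (p * m) := by
    ext ⟨x, y⟩
    rw [Set.mem_union, hFim, hGim, ← and_or_left]
    constructor
    · exact fun h => h.1
    · intro h
      refine ⟨h, ?_⟩
      rw [mem_R3] at h
      apply hpp.dvd_or_dvd
      push_cast at h
      refine ⟨y ^ 2 - d ^ 2 * m, ?_⟩
      simp only [hF, hG]
      linear_combination y ^ 2 * hcd - d ^ 2 * h
  have hdd := hnd c d hcd
  have h2c : ¬ (p : ℤ) ∣ 2 * c - d := by
    intro h
    have : (p : ℤ) ∣ 3 * d ^ 2 := by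
      obtain ⟨w, hw⟩ := h
      refine ⟨4 - w * (2 * c - d), ?_⟩
      linear_combination 4 * hcd - (2 * c - d) * hw
    rcases hpp.dvd_or_dvd this with h | h
    · have : p ∣ 3 := by exact_mod_cast h
      rw [Nat.prime_dvd_prime_iff_eq hp Nat.prime_three] at this
      omega
    · exact hdd (hpp.dvd_of_dvd_pow h)
  have hinter : (F '' R3 m ∩ G '' R3 m).ncard = (if p ∣ m then (R3 (m / p)).ncard else 0) := by
    have hd2 : ∀ x y : ℤ, (x, y) ∈ F '' R3 m ∩ G '' R3 m ↔
        (x, y) ∈ R3 (p * m) ∧ (p : ℤ) ∣ x ∧ (p : ℤ) ∣ y := by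
      intro x y
      rw [Set.mem_inter_iff, hFim, hGim]
      constructor
      · rintro ⟨⟨h, h1⟩, -, h2⟩
        refine ⟨h, ?_⟩
        simp only [hF, hG] at h1 h2
        have h3 : (p : ℤ) ∣ y * (2 * c - d) := by
          have e : y * (2 * c - d) = (y * c - x * d) + (x * d + y * c - y * d) := by ring
          rw [e]; exact dvd_add h1 h2
        have hy := (hpp.dvd_or_dvd h3).resolve_right h2c
        refine ⟨?_, hy⟩
        have h4 : (p : ℤ) ∣ x * d := by
          have e : x * d = y * c - (y * c - x * d) := by ring
          rw [e]; exact dvd_sub (hy.mul_right c) h1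
        exact (hpp.dvd_or_dvd h4).resolve_right hdd
      · rintro ⟨h, ⟨u, rfl⟩, ⟨v, rfl⟩⟩
        refine ⟨⟨h, ⟨v * c - u * d, ?_⟩⟩, h, ⟨u * d + v * c - v * d, ?_⟩⟩ <;> simp only [hF, hG] <;> ring
    split_ifs with h
    · obtain ⟨m, rfl⟩ := h
      rw [Nat.mul_div_cancel_left _ hp.pos, ← R3_scale p m hp.pos]
      congr 1
      ext ⟨x, y⟩
      rw [hd2]
      simp only [Set.mem_image, Prod.exists, mem_R3, Prod.mk.injEq]
      constructor
      · rintro ⟨h, ⟨a, rfl⟩, ⟨b, rfl⟩⟩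
        refine ⟨a, b, ?_, rfl, rfl⟩
        have : (p : ℤ) ^ 2 ≠ 0 := by positivity
        apply mul_left_cancel₀ this
        push_cast at h
        linear_combination h
      · rintro ⟨a, b, h, rfl, rfl⟩
        push_cast
        exact ⟨by linear_combination (p : ℤ) ^ 2 * h, dvd_mul_right _ _, dvd_mul_right _ _⟩
    · rw [Set.ncard_eq_zero (((R3_finite _).image _).inter_of_left _), Set.eq_empty_iff_forall_notMem]
      rintro ⟨x, y⟩ h'
      rw [hd2, mem_R3] at h'
      obtain ⟨h', ⟨a, rfl⟩, ⟨b, rfl⟩⟩ := h'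
      apply h
      rw [← Int.natCast_dvd_natCast]
      refine ⟨a ^ 2 - a * b + b ^ 2, ?_⟩
      apply mul_left_cancel₀ hp0
      push_cast at h'
      linear_combination -h'
  have := Set.ncard_union_add_ncard_inter (F '' R3 m) (G '' R3 m) ((R3_finite m).image _) ((R3_finite m).image _)
  rw [hunion, hinter, Set.ncard_image_of_injective _ hFi, Set.ncard_image_of_injective _ hGi] at this
  omega

lemma f3_eq (n : ℕ) : f3 n = ∑ d ∈ n.divisors, chi3 d := by
  rw [f3, Nat.sum_divisorsAntidiagonal (f := fun a b => chi3 a)]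

lemma f3_rec (p m : ℕ) (hp : p.Prime) (hm : m ≠ 0) :
    f3 (p * m) + chi3 p * (if p ∣ m then f3 (m / p) else 0) = (1 + chi3 p) * f3 m := by
  have hun : (p * m).divisors = m.divisors ∪ m.divisors.image (p * ·) := by
    ext d
    simp only [Finset.mem_union, Nat.mem_divisors, Finset.mem_image]
    constructor
    · rintro ⟨h, -⟩
      by_cases hpd : p ∣ d
      · obtain ⟨e, rfl⟩ := hpd
        exact Or.inr ⟨e, ⟨Nat.dvd_of_mul_dvd_mul_left hp.pos h, hm⟩, rfl⟩
      · exact Or.inl ⟨Nat.Coprime.dvd_of_dvd_mul_left ((Nat.Prime.coprime_iff_not_dvd hp).2 hpd).symm h, hm⟩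
    · rintro (⟨h, -⟩ | ⟨e, ⟨h, -⟩, rfl⟩)
      · exact ⟨h.mul_left p, mul_ne_zero hp.ne_zero hm⟩
      · exact ⟨Nat.mul_dvd_mul_left p h, mul_ne_zero hp.ne_zero hm⟩
  have hinj : Function.Injective (p * · : ℕ → ℕ) := fun a b h => Nat.eq_of_mul_eq_mul_left hp.pos h
  have hsum : ∀ s : Finset ℕ, ∑ d ∈ s.image (p * ·), chi3 d = chi3 p * ∑ d ∈ s, chi3 d := by
    intro s
    rw [Finset.sum_image (fun _ _ _ _ h => hinj h), Finset.mul_sum]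
    exact Finset.sum_congr rfl (fun d _ => chi3_mul p d)
  have hint : ∑ d ∈ m.divisors ∩ m.divisors.image (p * ·), chi3 d = chi3 p * (if p ∣ m then f3 (m / p) else 0) := by
    split_ifs with h
    · obtain ⟨k, rfl⟩ := h
      rw [Nat.mul_div_cancel_left _ hp.pos, f3_eq, ← hsum]
      congr 1
      ext d
      simp only [Finset.mem_inter, Nat.mem_divisors, Finset.mem_image]
      constructor
      · rintro ⟨⟨h, -⟩, e, -, rfl⟩
        exact ⟨e, ⟨Nat.dvd_of_mul_dvd_mul_left hp.pos h, right_ne_zero_of_mul hm⟩, rfl⟩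
      · rintro ⟨e, ⟨h, -⟩, rfl⟩
        exact ⟨⟨Nat.mul_dvd_mul_left p h, hm⟩, e, ⟨h.mul_left p, hm⟩, rfl⟩
    · rw [mul_zero, Finset.sum_eq_zero]
      intro d hd
      simp only [Finset.mem_inter, Nat.mem_divisors, Finset.mem_image] at hd
      obtain ⟨⟨h1, -⟩, e, -, rfl⟩ := hd
      exact absurd (dvd_of_mul_right_dvd h1) h
  have := Finset.sum_union_inter (s₁ := m.divisors) (s₂ := m.divisors.image (p * ·)) (f := chi3)
  rw [← hun, hint, hsum, ← f3_eq, ← f3_eq] at this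
  linarith

lemma R3_eq (n : ℕ) (hn : n % 3 ≠ 0) : ((R3 n).ncard : ℤ) = 6 * f3 n := by
  induction n using Nat.strong_induction_on with
  | _ n ih =>
  by_cases h1 : n = 1
  · subst h1; rw [R3_one]; simp [f3_eq, chi3]
  have hp := Nat.minFac_prime h1
  set p := n.minFac with hpdef
  obtain ⟨m, hm⟩ : p ∣ n := Nat.minFac_dvd n
  have hm0 : m ≠ 0 := by rintro rfl; simp [hm] at hn
  have hpm : p % 3 ≠ 0 := by intro h; rw [hm, Nat.mul_mod, h] at hn; simp at hn
  have hmm : m % 3 ≠ 0 := by intro h; rw [hm, Nat.mul_mod, h] at hn; simp at hn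
  have hlt : m < n := by
    have := hp.two_le
    rw [hm]; nlinarith [Nat.pos_of_ne_zero hm0]
  have hrec := f3_rec p m hp hm0
  have ih1 := ih m hlt hmm
  have ih2 : p ∣ m → ((R3 (m / p)).ncard : ℤ) = 6 * f3 (m / p) := by
    rintro ⟨k, rfl⟩
    rw [Nat.mul_div_cancel_left _ hp.pos]
    apply ih
    · have := hp.two_le
      have : k ≠ 0 := right_ne_zero_of_mul hm0
      nlinarith [Nat.pos_of_ne_zero this]
    · intro h; rw [Nat.mul_mod, h] at hmm; simp at hmm
  clear_value p
  subst hm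
  have hlt3 : p % 3 < 3 := Nat.mod_lt _ (by norm_num)
  obtain h3 | h3 : p % 3 = 1 ∨ p % 3 = 2 := by omega
  · have hs := R3_split p m hp h3
    have hc : chi3 p = 1 := by simp [chi3, h3]
    rw [hc] at hrec
    split_ifs at * with h
    · have := ih2 h; zify at hs; linarith
    · zify at hs; linarith
  · have hs := R3_inert p m hp h3
    have hc : chi3 p = -1 := by simp [chi3, h3]
    rw [hc] at hrec
    split_ifs at * with h
    · have := ih2 h; zify at hs; linarith
    · zify at hs; linarith


def PN (n : ℕ) : Set (ℕ × ℕ) := {z | z.1 ^ 2 + z.2 ^ 2 + z.2 = n + z.1 * z.2}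

def H3 (n : ℕ) : Set (ℤ × ℤ) := {z | z.1 ^ 2 - z.1 * z.2 + z.2 ^ 2 + z.2 = (n : ℤ)}

lemma mem_H3 (n : ℕ) (x y : ℤ) : (x, y) ∈ H3 n ↔ x ^ 2 - x * y + y ^ 2 + y = (n : ℤ) := Iff.rfl
lemma mem_PN (n : ℕ) (x y : ℕ) : (x, y) ∈ PN n ↔ x ^ 2 + y ^ 2 + y = n + x * y := Iff.rfl

lemma H3_R3 (n : ℕ) : (H3 n).Finite ∧ (R3 (3 * n + 1)).ncard = 2 * (H3 n).ncard := by
  set F : ℤ × ℤ → ℤ × ℤ := fun z => (1 + z.1 + z.2, 2 * z.1 - z.2) with hF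
  set G : ℤ × ℤ → ℤ × ℤ := fun z => (-(1 + z.1 + z.2), -(2 * z.1 - z.2)) with hG
  have hFi : Function.Injective F := by
    rintro ⟨a, b⟩ ⟨c, d⟩ h
    simp only [hF, Prod.mk.injEq] at h ⊢; omega
  have hGi : Function.Injective G := by
    rintro ⟨a, b⟩ ⟨c, d⟩ h
    simp only [hG, Prod.mk.injEq] at h ⊢; omega
  have hun : F '' H3 n ∪ G '' H3 n = R3 (3 * n + 1) := by
    ext ⟨x, y⟩
    simp only [Set.mem_union, Set.mem_image, Prod.exists, mem_H3, mem_R3, hF, hG, Prod.mk.injEq]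
    constructor
    · rintro (⟨a, b, h, rfl, rfl⟩ | ⟨a, b, h, rfl, rfl⟩) <;> push_cast <;> linear_combination 3 * h
    · intro h
      push_cast at h
      have hmod : ∃ q : ℤ, x + y = 3 * q + 1 ∨ x + y = -(3 * q + 1) := by
        have h3 : (x + y) % 3 ≠ 0 := by
          intro h0
          obtain ⟨w, hw⟩ := Int.dvd_of_emod_eq_zero h0
          have : (3 : ℤ) * (n - 3 * w ^ 2 + x * y) = -1 := by
            linear_combination -h + (x + y + 3 * w) * hw
          omega
        rcases (by omega : (x + y) % 3 = 1 ∨ (x + y) % 3 = 2) with h4 | h4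
        · exact ⟨(x + y) / 3, by omega⟩
        · exact ⟨-((x + y) / 3) - 1, by omega⟩
      obtain ⟨q, hq | hq⟩ := hmod
      · left
        refine ⟨q, x - 1 - q, ?_, by ring, by linear_combination -hq⟩
        obtain rfl : y = 3 * q + 1 - x := by linarith
        linarith
      · right
        refine ⟨q, -x - 1 - q, ?_, by ring, by linear_combination -hq⟩
        obtain rfl : y = -(3 * q + 1) - x := by linarith
        linarith
  have hfin : (H3 n).Finite := by
    have : (F '' H3 n).Finite := (R3_finite _).subset (by rw [← hun]; exact Set.subset_union_left)
    exact Set.Finite.of_finite_image this hFi.injOn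
  refine ⟨hfin, ?_⟩
  rw [← hun, Set.ncard_union_eq ?_ (hfin.image _) (hfin.image _),
    Set.ncard_image_of_injective _ hFi, Set.ncard_image_of_injective _ hGi, two_mul]
  rw [Set.disjoint_left]
  rintro _ ⟨⟨a, b⟩, -, rfl⟩ ⟨⟨c, d⟩, -, h⟩
  simp only [hF, hG, Prod.mk.injEq] at h
  omega

lemma PN_H3 (n : ℕ) : (PN n).Finite ∧ (H3 n).ncard = 3 * (PN n).ncard := by
  set C : ℕ × ℕ → ℤ × ℤ := fun z => ((z.1 : ℤ), (z.2 : ℤ)) with hC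
  set D : ℕ × ℕ → ℤ × ℤ := fun z => (-(z.2 : ℤ) - 1, (z.1 : ℤ) - z.2 - 1) with hD
  set E : ℕ × ℕ → ℤ × ℤ := fun z => ((z.2 : ℤ) - z.1, -(z.1 : ℤ) - 1) with hE
  have hCi : Function.Injective C := by
    rintro ⟨a, b⟩ ⟨c, d⟩ h
    simp only [hC, Prod.mk.injEq] at h ⊢; omega
  have hDi : Function.Injective D := by
    rintro ⟨a, b⟩ ⟨c, d⟩ h
    simp only [hD, Prod.mk.injEq] at h ⊢; omega
  have hEi : Function.Injective E := by
    rintro ⟨a, b⟩ ⟨c, d⟩ h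
    simp only [hE, Prod.mk.injEq] at h ⊢; omega
  have hun : C '' PN n ∪ (D '' PN n ∪ E '' PN n) = H3 n := by
    ext ⟨x, y⟩
    simp only [Set.mem_union, Set.mem_image, Prod.exists, mem_H3, mem_PN, hC, hD, hE, Prod.mk.injEq]
    constructor
    · rintro (⟨a, b, h, rfl, rfl⟩ | ⟨a, b, h, rfl, rfl⟩ | ⟨a, b, h, rfl, rfl⟩) <;> zify at h <;> linear_combination h
    · intro h
      by_cases h1 : 0 ≤ x ∧ 0 ≤ y
      · left
        obtain ⟨a, rfl⟩ := Int.eq_ofNat_of_zero_le h1.1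
        obtain ⟨b, rfl⟩ := Int.eq_ofNat_of_zero_le h1.2
        refine ⟨a, b, ?_, rfl, rfl⟩
        zify; linear_combination h
      right
      by_cases h2 : y ≤ -1 ∧ y + 1 ≤ x
      · right
        obtain ⟨a, ha⟩ := Int.eq_ofNat_of_zero_le (by omega : 0 ≤ -y - 1)
        obtain ⟨b, hb⟩ := Int.eq_ofNat_of_zero_le (by omega : 0 ≤ x - y - 1)
        refine ⟨a, b, ?_, by omega, by omega⟩
        zify; rw [← ha, ← hb]; linear_combination h
      · left
        obtain ⟨a, ha⟩ := Int.eq_ofNat_of_zero_le (by omega : 0 ≤ y - x)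
        obtain ⟨b, hb⟩ := Int.eq_ofNat_of_zero_le (by omega : 0 ≤ -x - 1)
        refine ⟨a, b, ?_, by omega, by omega⟩
        zify; rw [← ha, ← hb]; linear_combination h
  have hfin : (PN n).Finite := by
    have : (C '' PN n).Finite := (H3_R3 n).1.subset (by rw [← hun]; exact Set.subset_union_left)
    exact Set.Finite.of_finite_image this hCi.injOn
  refine ⟨hfin, ?_⟩
  rw [← hun, Set.ncard_union_eq ?_ (hfin.image _) ((hfin.image _).union (hfin.image _)),
    Set.ncard_union_eq ?_ (hfin.image _) (hfin.image _),
    Set.ncard_image_of_injective _ hCi, Set.ncard_image_of_injective _ hDi,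
    Set.ncard_image_of_injective _ hEi]
  · ring
  · rw [Set.disjoint_left]
    rintro _ ⟨⟨a, b⟩, -, rfl⟩ ⟨⟨c, d⟩, -, h⟩
    simp only [hD, hE, Prod.mk.injEq] at h
    omega
  · rw [Set.disjoint_left]
    rintro _ ⟨⟨a, b⟩, -, rfl⟩ (⟨⟨c, d⟩, -, h⟩ | ⟨⟨c, d⟩, -, h⟩)
    · simp only [hC, hD, Prod.mk.injEq] at h
      omega
    · simp only [hC, hE, Prod.mk.injEq] at h
      omega

lemma PN_f3 (n : ℕ) : ((PN n).ncard : ℤ) = f3 (3 * n + 1) := by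
  have h1 := R3_eq (3 * n + 1) (by omega)
  rw [(H3_R3 n).2, (PN_H3 n).2] at h1
  push_cast at h1
  linarith

/-! first column hooks -/

def hk (μ : YoungDiagram) (i : ℕ) : ℕ := μ.rowLen i + (μ.colLen 0 - 1 - i)

def bX (μ : YoungDiagram) : Finset ℕ := (Finset.range (μ.colLen 0)).image (hk μ)

lemma row_pos (μ : YoungDiagram) (i : ℕ) : 0 < μ.rowLen i ↔ i < μ.colLen 0 := by
  rw [← YoungDiagram.mem_iff_lt_rowLen, YoungDiagram.mem_iff_lt_colLen]

lemma row_col (μ : YoungDiagram) (i j : ℕ) : j < μ.rowLen i ↔ i < μ.colLen j := by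
  rw [← YoungDiagram.mem_iff_lt_rowLen, YoungDiagram.mem_iff_lt_colLen]

lemma hk_lt (μ : YoungDiagram) {i k : ℕ} (hik : i < k) (hk' : k < μ.colLen 0) : hk μ k < hk μ i := by
  have := μ.rowLen_anti i k hik.le
  unfold hk; omega

lemma hk_injOn (μ : YoungDiagram) : Set.InjOn (hk μ) (Finset.range (μ.colLen 0)) := by
  intro i hi k hk' h
  simp only [Finset.coe_range, Set.mem_Iio] at hi hk'
  rcases lt_trichotomy i k with h1 | h1 | h1
  · have := hk_lt μ h1 hk'; omega
  · exact h1
  · have := hk_lt μ h1 hi; omega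

lemma mem_bX (μ : YoungDiagram) (x : ℕ) : x ∈ bX μ ↔ ∃ i < μ.colLen 0, hk μ i = x := by
  simp [bX]

lemma zero_notMem_bX (μ : YoungDiagram) : 0 ∉ bX μ := by
  rw [mem_bX]
  rintro ⟨i, hi, h⟩
  have := (row_pos μ i).2 hi
  unfold hk at h; omega

lemma card_bX (μ : YoungDiagram) : (bX μ).card = μ.colLen 0 := by
  rw [bX, Finset.card_image_of_injOn (hk_injOn μ), Finset.card_range]

lemma sum_bX (μ : YoungDiagram) : ∑ x ∈ bX μ, x = μ.card + ∑ i ∈ Finset.range (μ.colLen 0), i := by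
  rw [bX, Finset.sum_image (hk_injOn μ)]
  unfold hk
  rw [Finset.sum_add_distrib, Finset.sum_range_reflect (fun i => i)]
  congr 1
  have : μ.card = μ.cells.card := rfl
  rw [this, Finset.card_eq_sum_card_fiberwise (f := Prod.fst) (t := Finset.range (μ.colLen 0))]
  · refine Finset.sum_congr rfl (fun i _ => ?_)
    rw [YoungDiagram.rowLen_eq_card]; rfl
  · rintro ⟨i, j⟩ h
    simp only [Finset.mem_coe, YoungDiagram.mem_cells] at h
    simp only [Finset.coe_range, Set.mem_Iio]
    rw [YoungDiagram.mem_iff_lt_rowLen] at h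
    rw [← row_pos]; omega

lemma bX_injective : Function.Injective bX := by
  intro μ ν h
  have hl : μ.colLen 0 = ν.colLen 0 := by rw [← card_bX, ← card_bX, h]
  have key : ∀ (ρ : YoungDiagram) (hρ : (bX ρ).card = μ.colLen 0), (fun i : Fin (μ.colLen 0) => hk ρ (μ.colLen 0 - 1 - i)) = (bX ρ).orderEmbOfFin hρ := by
    intro ρ hρ
    have hρ' := hρ
    rw [card_bX] at hρ'
    apply Finset.orderEmbOfFin_unique
    · intro i
      rw [mem_bX]
      exact ⟨_, by have := i.2; omega, rfl⟩
    · intro i j hij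
      have := j.2
      have hij' : (i : ℕ) < j := hij
      exact hk_lt ρ (by omega) (by omega)
  have h1 := key μ (card_bX μ)
  have h2 := key ν (by rw [card_bX, hl])
  have h3 : ∀ i, μ.rowLen i = ν.rowLen i := by
    intro i
    by_cases hi : i < μ.colLen 0
    · have e : (fun i : Fin (μ.colLen 0) => hk μ (μ.colLen 0 - 1 - i)) = (fun i : Fin (μ.colLen 0) => hk ν (μ.colLen 0 - 1 - i)) := by
        rw [h1, h2]; simp only [h]
      have := congrFun e ⟨μ.colLen 0 - 1 - i, by omega⟩
      simp only at this
      have e2 : μ.colLen 0 - 1 - (μ.colLen 0 - 1 - i) = i := by omega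
      rw [e2] at this
      unfold hk at this
      omega
    · have h4 := row_pos μ i
      have h5 := row_pos ν i
      omega
  apply YoungDiagram.ext
  ext ⟨i, j⟩
  rw [YoungDiagram.mem_cells, YoungDiagram.mem_cells, YoungDiagram.mem_iff_lt_rowLen, YoungDiagram.mem_iff_lt_rowLen, h3]

lemma bX_surj (X : Finset ℕ) (hX : 0 ∉ X) : ∃ μ, bX μ = X := by
  set k := X.card with hkdef
  set e := X.orderEmbOfFin hkdef.symm with he
  set E : ℕ → ℕ := fun i => if h : i < k then e ⟨i, h⟩ else 0 with hE
  have hEmem : ∀ i < k, E i ∈ X := by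
    intro i hi
    simp only [hE, hi, dif_pos]
    exact Finset.orderEmbOfFin_mem _ _ _
  have hEsurj : ∀ x ∈ X, ∃ i < k, E i = x := by
    intro x hx
    have : x ∈ Set.range e := by rw [he, Finset.range_orderEmbOfFin]; exact hx
    obtain ⟨i, rfl⟩ := this
    exact ⟨i, i.2, by simp [hE]⟩
  have hElt : ∀ i, i + 1 < k → E i < E (i + 1) := by
    intro i hi
    have hi' : i < k := by omega
    simp only [hE, hi, hi', dif_pos]
    apply e.strictMono
    simp [Fin.lt_def]
  have hEd : ∀ d i, i + d < k → E i + d ≤ E (i + d) := by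
    intro d
    induction d with
    | zero => intro i _; simp
    | succ d ih =>
      intro i h
      have h1 := ih i (by omega)
      have h2 := hElt (i + d) (by omega)
      have e : i + (d + 1) = i + d + 1 := by omega
      rw [e]; omega
  have hEpos : ∀ i < k, i < E i := by
    intro i hi
    have h1 := hEd i 0 (by omega)
    have h2 : E 0 ≠ 0 := fun h => hX (h ▸ hEmem 0 (by omega))
    rw [zero_add] at h1
    omega
  set r : ℕ → ℕ := fun i => E (k - 1 - i) - (k - 1 - i) with hr
  have hranti : ∀ i j, i ≤ j → j < k → r j ≤ r i := by
    intro i j hij hj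
    have h1 := hEd (j - i) (k - 1 - j) (by omega)
    have h2 : k - 1 - j + (j - i) = k - 1 - i := by omega
    rw [h2] at h1
    simp only [hr]; omega
  have hrpos : ∀ i < k, 0 < r i := by
    intro i hi
    have := hEpos (k - 1 - i) (by omega)
    simp only [hr]; omega
  let μ : YoungDiagram :=
    { cells := (Finset.range k).biUnion (fun i => (Finset.range (r i)).image (Prod.mk i))
      isLowerSet := by
        rintro ⟨i, j⟩ ⟨i', j'⟩ hle h
        simp only [Finset.coe_biUnion, Finset.coe_range, Finset.coe_image, Set.mem_iUnion, Set.mem_image, Set.mem_Iio, Prod.mk.injEq, exists_prop] at h ⊢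
        obtain ⟨a, ha, b, hb, rfl, rfl⟩ := h
        obtain ⟨h1, h2⟩ := Prod.mk_le_mk.1 hle
        refine ⟨i', by omega, j', ?_, rfl, rfl⟩
        have := hranti i' a h1 ha
        omega }
  have hmem : ∀ i j, (i, j) ∈ μ ↔ i < k ∧ j < r i := by
    intro i j
    rw [← YoungDiagram.mem_cells]
    simp only [μ, Finset.mem_biUnion, Finset.mem_range, Finset.mem_image, Prod.mk.injEq]
    constructor
    · rintro ⟨a, ha, b, hb, rfl, rfl⟩; exact ⟨ha, hb⟩
    · rintro ⟨ha, hb⟩; exact ⟨i, ha, j, hb, rfl, rfl⟩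
  have hrow : ∀ i < k, μ.rowLen i = r i := by
    intro i hi
    have h1 : ∀ j, j < μ.rowLen i ↔ j < r i := by
      intro j
      rw [← YoungDiagram.mem_iff_lt_rowLen, hmem]; simp [hi]
    have h2 := h1 (μ.rowLen i)
    have h3 := h1 (r i)
    omega
  have hcol : μ.colLen 0 = k := by
    have h1 : ∀ i, i < μ.colLen 0 ↔ i < k := by
      intro i
      rw [← YoungDiagram.mem_iff_lt_colLen, hmem]
      exact ⟨fun h => h.1, fun h => ⟨h, hrpos i h⟩⟩
    have h2 := h1 (μ.colLen 0)
    have h3 := h1 k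
    omega
  have hhk : ∀ i < k, hk μ i = E (k - 1 - i) := by
    intro i hi
    have := hEpos (k - 1 - i) (by omega)
    rw [hk, hrow i hi, hcol]
    simp only [hr]; omega
  refine ⟨μ, ?_⟩
  ext x
  rw [mem_bX, hcol]
  constructor
  · rintro ⟨i, hi, rfl⟩
    rw [hhk i hi]; exact hEmem _ (by omega)
  · intro hx
    obtain ⟨i, hi, rfl⟩ := hEsurj x hx
    refine ⟨k - 1 - i, by omega, ?_⟩
    rw [hhk _ (by omega)]
    congr 1; omega

lemma hook_of_notMem (μ : YoungDiagram) (i y : ℕ) (hi : i < μ.colLen 0) (hy : y < hk μ i)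
    (hyX : y ∉ bX μ) : ∃ j < μ.rowLen i, μ.hookLength i j = hk μ i - y := by
  classical
  have hex : ∃ k, μ.colLen 0 ≤ k ∨ hk μ k < y := ⟨_, Or.inl le_rfl⟩
  set k := Nat.find hex with hkd
  have hk1 : μ.colLen 0 ≤ k ∨ hk μ k < y := Nat.find_spec hex
  have hk2 : ∀ m < k, m < μ.colLen 0 ∧ y < hk μ m := by
    intro m hm
    have := Nat.find_min hex hm
    push Not at this
    refine ⟨this.1, lt_of_le_of_ne this.2 ?_⟩
    rintro rfl
    exact hyX ((mem_bX _ _).2 ⟨m, this.1, rfl⟩)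
  have hik : i < k := by
    by_contra! h
    rcases h.eq_or_lt with h | h
    · rw [h] at hk1; omega
    · have := hk_lt μ h hi
      omega
  have hkl : k ≤ μ.colLen 0 := by
    have := (hk2 (k - 1) (by omega)).1; omega
  have h1 := hk2 (k - 1) (by omega)
  have hyk : μ.colLen 0 - k ≤ y := by
    rcases hk1 with h | h
    · omega
    · by_cases h' : k < μ.colLen 0
      · have := (row_pos μ k).2 h'
        unfold hk at h; omega
      · omega
  refine ⟨y - (μ.colLen 0 - k), ?_⟩
  set j := y - (μ.colLen 0 - k) with hj
  have hjk1 : j < μ.rowLen (k - 1) := by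
    have := h1.2
    unfold hk at this; omega
  have hjk2 : ¬ j < μ.rowLen k := by
    by_cases h' : k < μ.colLen 0
    · have h2 : hk μ k < y := by omega
      unfold hk at h2; omega
    · have := row_pos μ k
      omega
  have hc : μ.colLen j = k := by
    rw [row_col] at hjk1 hjk2
    omega
  have hji : j < μ.rowLen i := by
    have := μ.rowLen_anti i (k - 1) (by omega)
    omega
  refine ⟨hji, ?_⟩
  unfold YoungDiagram.hookLength
  rw [hc]
  unfold hk at hy ⊢
  omega

lemma notMem_of_hook (μ : YoungDiagram) (i j : ℕ) (hj : j < μ.rowLen i) :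
    0 < μ.hookLength i j ∧ μ.hookLength i j ≤ hk μ i ∧ hk μ i - μ.hookLength i j ∉ bX μ := by
  have hc := (row_col μ i j).1 hj
  have hcl := μ.colLen_anti 0 j (Nat.zero_le _)
  have hh : μ.hookLength i j = μ.rowLen i + μ.colLen j - i - j - 1 := rfl
  have hhk : hk μ i = μ.rowLen i + (μ.colLen 0 - 1 - i) := rfl
  refine ⟨by omega, by omega, ?_⟩
  rw [mem_bX]
  rintro ⟨m, hm, h⟩
  have hmm : hk μ m = μ.rowLen m + (μ.colLen 0 - 1 - m) := rfl
  have := row_col μ m j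
  omega

lemma core_iff (μ : YoungDiagram) :
    μ.IsThreeCore ↔ ∀ x ∈ bX μ, 3 ≤ x → x - 3 ∈ bX μ := by
  constructor
  · intro h x hx h3
    by_contra hn
    obtain ⟨i, hi, rfl⟩ := (mem_bX _ _).1 hx
    obtain ⟨j, hj, hh⟩ := hook_of_notMem μ i (hk μ i - 3) hi (by omega) hn
    apply h (i, j) (by rw [YoungDiagram.mem_cells, YoungDiagram.mem_iff_lt_rowLen]; exact hj)
    simp only [hh]
    have : hk μ i - (hk μ i - 3) = 3 := by omega
    rw [this]
  · rintro h ⟨i, j⟩ hc ⟨q, hq⟩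
    rw [YoungDiagram.mem_cells, YoungDiagram.mem_iff_lt_rowLen] at hc
    simp only at hq
    obtain ⟨h1, h2, h3⟩ := notMem_of_hook μ i j hc
    rw [hq] at h1 h2 h3
    apply h3
    have hi : hk μ i ∈ bX μ := (mem_bX _ _).2 ⟨i, (row_pos μ i).1 (by omega), rfl⟩
    clear hq h1 h3
    induction q with
    | zero => simpa using hi
    | succ q ih =>
      have := h _ (ih (by omega)) (by omega)
      have e : hk μ i - 3 * q - 3 = hk μ i - 3 * (q + 1) := by omega
      rwa [e] at this

def XX (a b : ℕ) : Finset ℕ :=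
  (Finset.range a).image (fun i => 3 * i + 1) ∪ (Finset.range b).image (fun i => 3 * i + 2)

lemma mem_XX (a b x : ℕ) : x ∈ XX a b ↔ (x % 3 = 1 ∧ x / 3 < a) ∨ (x % 3 = 2 ∧ x / 3 < b) := by
  simp only [XX, Finset.mem_union, Finset.mem_image, Finset.mem_range]
  constructor
  · rintro (⟨i, hi, rfl⟩ | ⟨i, hi, rfl⟩) <;> omega
  · rintro (⟨h1, h2⟩ | ⟨h1, h2⟩)
    · exact Or.inl ⟨x / 3, h2, by omega⟩
    · exact Or.inr ⟨x / 3, h2, by omega⟩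

lemma XX_disj (a b : ℕ) : Disjoint ((Finset.range a).image (fun i => 3 * i + 1)) ((Finset.range b).image (fun i => 3 * i + 2)) := by
  rw [Finset.disjoint_left]
  simp only [Finset.mem_image, Finset.mem_range]
  rintro _ ⟨i, hi, rfl⟩ ⟨j, hj, h⟩
  omega

lemma card_XX (a b : ℕ) : (XX a b).card = a + b := by
  rw [XX, Finset.card_union_of_disjoint (XX_disj a b), Finset.card_image_of_injective, Finset.card_image_of_injective, Finset.card_range, Finset.card_range]
  · intro x y h; simp only at h; omega
  · intro x y h; simp only at h; omega

lemma sum_XX (a b : ℕ) : 2 * ∑ x ∈ XX a b, x + a = 3 * a ^ 2 + 3 * b ^ 2 + b := by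
  rw [XX, Finset.sum_union (XX_disj a b), Finset.sum_image (fun _ _ _ _ h => by omega),
    Finset.sum_image (fun _ _ _ _ h => by omega)]
  have h1 : 2 * ∑ i ∈ Finset.range a, (3 * i + 1) + a = 3 * a ^ 2 := by
    induction a with
    | zero => simp
    | succ a ih => rw [Finset.sum_range_succ]; linarith
  have h2 : 2 * ∑ i ∈ Finset.range b, (3 * i + 2) = 3 * b ^ 2 + b := by
    induction b with
    | zero => simp
    | succ a ih => rw [Finset.sum_range_succ]; linarith
  omega

lemma XX_of_closed (X : Finset ℕ) (h0 : 0 ∉ X) (h : ∀ x ∈ X, 3 ≤ x → x - 3 ∈ X) :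
    ∃ a b, X = XX a b := by
  have key : ∀ c, ∃ a, ∀ i, 3 * i + c ∈ X ↔ i < a := by
    intro c
    have hex : ∃ a, 3 * a + c ∉ X := by
      obtain ⟨N, hN⟩ := X.bddAbove
      refine ⟨N + 1, fun hm => ?_⟩
      have := hN hm
      omega
    classical
    refine ⟨Nat.find hex, fun i => ⟨fun hi => ?_, fun hi => ?_⟩⟩
    · by_contra! hle
      obtain ⟨d, rfl⟩ := Nat.exists_eq_add_of_le hle
      clear hle
      induction d with
      | zero => exact Nat.find_spec hex hi
      | succ d ih =>
        apply ih
        have := h _ hi (by omega)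
        have e : 3 * (Nat.find hex + (d + 1)) + c - 3 = 3 * (Nat.find hex + d) + c := by omega
        rwa [e] at this
    · simpa using Nat.find_min hex hi
  obtain ⟨a, ha⟩ := key 1
  obtain ⟨b, hb⟩ := key 2
  obtain ⟨z, hz⟩ := key 0
  refine ⟨a, b, ?_⟩
  ext x
  rw [mem_XX]
  have hz0 : z = 0 := by
    have := hz 0
    simp only [mul_zero, add_zero, h0, false_iff] at this
    omega
  have h1 := ha (x / 3)
  have h2 := hb (x / 3)
  have h3 := hz (x / 3)
  obtain hx | hx | hx : x = 3 * (x / 3) + 0 ∨ x = 3 * (x / 3) + 1 ∨ x = 3 * (x / 3) + 2 := by omega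
  · rw [← hx] at h3; rw [h3]; omega
  · rw [← hx] at h1; rw [h1]; omega
  · rw [← hx] at h2; rw [h2]; omega

lemma XX_inj (a b c d : ℕ) (h : XX a b = XX c d) : a = c ∧ b = d := by
  have h1 : ∀ x, x ∈ XX a b ↔ x ∈ XX c d := fun x => by rw [h]
  simp only [mem_XX] at h1
  have e1 := h1 (3 * a + 1)
  have e2 := h1 (3 * c + 1)
  have e3 := h1 (3 * b + 2)
  have e4 := h1 (3 * d + 2)
  omega

lemma size_XX (μ : YoungDiagram) (a b n : ℕ) (h : bX μ = XX a b) : μ.card = n ↔ (a, b) ∈ PN n := by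
  have h1 := sum_bX μ
  have h2 := card_bX μ
  rw [h, card_XX] at h2
  rw [h, ← h2] at h1
  have h3 := sum_XX a b
  have h4 := Finset.sum_range_id_mul_two (a + b)
  rw [mem_PN]
  have h5 : (a + b) * (a + b - 1) + (a + b) = (a + b) ^ 2 := by
    rcases Nat.eq_zero_or_pos (a + b) with h | h
    · rw [h]; rfl
    · obtain ⟨c, hc⟩ := Nat.exists_eq_add_of_lt h
      rw [hc]; simp; ring
  have h6 : μ.card + a * b = a ^ 2 + b ^ 2 + b := by nlinarith
  omega

lemma exists_ab (μ : YoungDiagram) (h : μ.IsThreeCore) : ∃ z : ℕ × ℕ, bX μ = XX z.1 z.2 := by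
  obtain ⟨a, b, h⟩ := XX_of_closed _ (zero_notMem_bX μ) ((core_iff μ).1 h)
  exact ⟨(a, b), h⟩

lemma a3_PN (n : ℕ) : Finite {μ : YoungDiagram // μ.card = n ∧ μ.IsThreeCore} ∧
    a3 n = (PN n).ncard := by
  let g : {μ : YoungDiagram // μ.card = n ∧ μ.IsThreeCore} → (PN n) := fun μ =>
    ⟨(exists_ab μ.1 μ.2.2).choose, (size_XX μ.1 _ _ n (exists_ab μ.1 μ.2.2).choose_spec).1 μ.2.1⟩
  have hg : ∀ μ, bX μ.1 = XX (g μ).1.1 (g μ).1.2 := fun μ => (exists_ab μ.1 μ.2.2).choose_spec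
  have hinj : Function.Injective g := by
    intro μ ν h
    apply Subtype.ext
    apply bX_injective
    rw [hg, hg, h]
  have hsurj : Function.Surjective g := by
    rintro ⟨⟨a, b⟩, h⟩
    obtain ⟨μ, hμ⟩ := bX_surj (XX a b) (by rw [mem_XX]; omega)
    have hcore : μ.IsThreeCore := by
      rw [core_iff, hμ]
      intro x
      rw [mem_XX, mem_XX]; omega
    refine ⟨⟨μ, (size_XX μ a b n hμ).2 h, hcore⟩, ?_⟩
    have := hg ⟨μ, (size_XX μ a b n hμ).2 h, hcore⟩
    rw [hμ] at this
    obtain ⟨h1, h2⟩ := XX_inj _ _ _ _ this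
    exact Subtype.ext (Prod.ext h1.symm h2.symm)
  haveI : Finite (PN n) := (PN_H3 n).1
  refine ⟨Finite.of_injective g hinj, ?_⟩
  exact Nat.card_eq_of_bijective g ⟨hinj, hsurj⟩

lemma A3_sum (n : ℕ) : A3 n = ∑ p ∈ Finset.HasAntidiagonal.antidiagonal n, a3 p.1 * a3 p.2 := by
  haveI : ∀ m, Finite {μ : YoungDiagram // μ.card = m ∧ μ.IsThreeCore} := fun m => (a3_PN m).1
  let e : {p : YoungDiagram × YoungDiagram //
      p.1.card + p.2.card = n ∧ p.1.IsThreeCore ∧ p.2.IsThreeCore} ≃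
      Σ q : {q : ℕ × ℕ // q ∈ Finset.HasAntidiagonal.antidiagonal n},
        {μ : YoungDiagram // μ.card = q.1.1 ∧ μ.IsThreeCore} ×
        {μ : YoungDiagram // μ.card = q.1.2 ∧ μ.IsThreeCore} :=
    { toFun := fun p => ⟨⟨(p.1.1.card, p.1.2.card), by
        rw [Finset.HasAntidiagonal.mem_antidiagonal]; exact p.2.1⟩,
        ⟨p.1.1, rfl, p.2.2.1⟩, ⟨p.1.2, rfl, p.2.2.2⟩⟩
      invFun := fun s => ⟨(s.2.1.1, s.2.2.1), by
        have := s.1.2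
        rw [Finset.HasAntidiagonal.mem_antidiagonal] at this
        refine ⟨?_, s.2.1.2.2, s.2.2.2.2⟩
        rw [s.2.1.2.1, s.2.2.2.1]; exact this⟩
      left_inv := fun p => rfl
      right_inv := by
        rintro ⟨⟨⟨i, j⟩, h⟩, ⟨μ, h1, h2⟩, ⟨ν, h4, h3⟩⟩
        change μ.card = i at h1
        change ν.card = j at h4
        subst h1
        subst h4
        rfl }
  rw [A3, Nat.card_congr e, Nat.card_sigma]
  simp only [Nat.card_prod]
  exact Finset.sum_coe_sort (Finset.HasAntidiagonal.antidiagonal n) (fun p => a3 p.1 * a3 p.2)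

lemma A3_sigma (n : ℕ) : 3 * (A3 n : ℤ) = ∑ d ∈ (3 * n + 2).divisors, (d : ℤ) := by
  rw [← f3_conv, A3_sum]
  push_cast
  simp only [(a3_PN _).2, PN_f3]

lemma sigma_pow (p a m : ℕ) (hp : p.Prime) (hm : Nat.Coprime p m) :
    ((p : ℤ) - 1) * ∑ d ∈ (p ^ a * m).divisors, (d : ℤ) =
      ((p : ℤ) ^ (a + 1) - 1) * ∑ d ∈ m.divisors, (d : ℤ) := by
  have h := Nat.Coprime.sum_divisors_mul (m := p ^ a) (n := m) (Nat.Coprime.pow_left a hm)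
  have h1 : ∑ d ∈ (p ^ a * m).divisors, (d : ℤ) = (∑ d ∈ (p ^ a).divisors, (d : ℤ)) * ∑ d ∈ m.divisors, (d : ℤ) := by
    have h2 := congrArg (Nat.cast : ℕ → ℤ) h
    push_cast at h2; exact h2
  rw [h1, Nat.sum_divisors_prime_pow hp, ← mul_assoc]
  push_cast
  rw [mul_geom_sum]

theorem A3_rec_two_mod_three (p k n : ℕ) (hp : p.Prime) (hp3 : p % 3 = 2) :
    ((p : ℤ) ^ 2 - 1) * A3 (p ^ (2 * k) * n + (2 * p ^ (2 * k) - 2) / 3) +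
      ((p : ℤ) ^ (2 * k) - (p : ℤ) ^ 2) * A3 n =
    ((p : ℤ) ^ (2 * k) - 1) * A3 (p ^ 2 * n + (2 * p ^ 2 - 2) / 3) := by
  have harg : ∀ k, 3 * (p ^ (2 * k) * n + (2 * p ^ (2 * k) - 2) / 3) + 2 = p ^ (2 * k) * (3 * n + 2) := by
    intro k
    have h1 : p ^ (2 * k) % 3 = 1 := by
      rw [pow_mul, Nat.pow_mod, Nat.pow_mod p, hp3]; simp
    have h2 : p ^ (2 * k) * (3 * n + 2) = 3 * (p ^ (2 * k) * n) + 2 * p ^ (2 * k) := by ring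
    omega
  obtain ⟨a, m, hm, hN⟩ := Nat.exists_eq_pow_mul_and_not_dvd (n := 3 * n + 2) (by omega) p hp.ne_one
  have hcop : Nat.Coprime p m := (Nat.Prime.coprime_iff_not_dvd hp).2 hm
  have hs : ∀ k, ((p : ℤ) - 1) * (3 * (A3 (p ^ (2 * k) * n + (2 * p ^ (2 * k) - 2) / 3) : ℤ)) =
      ((p : ℤ) ^ (2 * k + a + 1) - 1) * ∑ d ∈ m.divisors, (d : ℤ) := by
    intro k
    rw [A3_sigma, harg, hN, ← mul_assoc, ← pow_add, sigma_pow p _ m hp hcop]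
  have e0 := hs 0
  have e1 := hs 1
  have ek := hs k
  have hp1 : ((p : ℤ) - 1) * 3 ≠ 0 := by
    have := hp.two_le
    have : (2 : ℤ) ≤ p := by exact_mod_cast this
    apply mul_ne_zero <;> omega
  simp only [mul_zero, pow_zero, one_mul, mul_one, Nat.sub_self, Nat.zero_div, add_zero] at e0 e1
  apply mul_left_cancel₀ hp1
  generalize (A3 (p ^ (2 * k) * n + (2 * p ^ (2 * k) - 2) / 3) : ℤ) = Ak at *
  generalize (A3 (p ^ 2 * n + (2 * p ^ 2 - 2) / 3) : ℤ) = A1 at *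
  generalize (A3 n : ℤ) = A0 at *
  linear_combination ((p : ℤ) ^ 2 - 1) * ek + ((p : ℤ) ^ (2 * k) - (p : ℤ) ^ 2) * e0 - ((p : ℤ) ^ (2 * k) - 1) * e1
end

section
/- Let p be a prime with p ≡ 1 (mod 3), and let k, n be nonnegative integers such that p does not divide 3n+2. Then (p−1)·A_3(p^k·n + (2p^k − 2)/3) = (p^{k+1} − 1)·A_3(n). (Here (2p^k − 2)/3 is an integer since p ≡ 1 (mod 3).) -/
namespace A3aux

abbrev HQ := QuaternionAlgebra ℤ (-1) (-1) (-1)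

def nm (x : HQ) : ℤ := x.re^2 - x.re*x.imI + x.imI^2 + (x.imJ^2 - x.imJ*x.imK + x.imK^2)

lemma nm_mul (x y : HQ) : nm (x*y) = nm x * nm y := by
  simp only [nm, QuaternionAlgebra.re_mul, QuaternionAlgebra.imI_mul, QuaternionAlgebra.imJ_mul, QuaternionAlgebra.imK_mul]
  ring

lemma nm_star (x : HQ) : nm (star x) = nm x := by
  simp only [nm, QuaternionAlgebra.re_star, QuaternionAlgebra.imI_star, QuaternionAlgebra.imJ_star, QuaternionAlgebra.imK_star]
  ring

lemma mul_star_nm (x : HQ) : x * star x = ((nm x : ℤ) : HQ) := by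
  generalize hn : nm x = n
  ext <;> simp <;> (try rw [← hn, nm]) <;> ring

lemma star_mul_nm (x : HQ) : star x * x = ((nm x : ℤ) : HQ) := by
  generalize hn : nm x = n
  ext <;> simp <;> (try rw [← hn, nm]) <;> ring

lemma form_nonneg (a b : ℤ) : 0 ≤ a^2-a*b+b^2 := by nlinarith [sq_nonneg (a-b), sq_nonneg a, sq_nonneg b]

lemma nm_nonneg (x : HQ) : 0 ≤ nm x := add_nonneg (form_nonneg _ _) (form_nonneg _ _)

lemma form_bound {a b m : ℤ} (h : a^2-a*b+b^2 ≤ m) : (-(2*m) ≤ a ∧ a ≤ 2*m) ∧ (-(2*m) ≤ b ∧ b ≤ 2*m) := by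
  have h1 : a^2 ≤ 2*m := by nlinarith [sq_nonneg (a-b), sq_nonneg a, sq_nonneg b, sq_nonneg (a-2*b)]
  have h2 : b^2 ≤ 2*m := by nlinarith [sq_nonneg (a-b), sq_nonneg a, sq_nonneg b, sq_nonneg (2*a-b)]
  have := Int.le_self_sq a
  have := Int.le_self_sq b
  have := Int.le_self_sq (-a)
  have := Int.le_self_sq (-b)
  refine ⟨⟨?_, ?_⟩, ?_, ?_⟩ <;> nlinarith

lemma nm_eq_zero {x : HQ} (h : nm x = 0) : x = 0 := by
  have h1 := form_nonneg x.re x.imI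
  have h2 := form_nonneg x.imJ x.imK
  unfold nm at h
  have a1 := form_bound (a := x.re) (b := x.imI) (m := 0) (by linarith)
  have a2 := form_bound (a := x.imJ) (b := x.imK) (m := 0) (by linarith)
  ext <;> simp <;> omega

lemma nm_zero : nm 0 = 0 := by simp [nm]

lemma fin_nm (m : ℤ) : {x : HQ | nm x = m}.Finite := by
  have : Set.Finite ((Set.Icc (-(2*m)) (2*m)) ×ˢ (Set.Icc (-(2*m)) (2*m)) ×ˢ (Set.Icc (-(2*m)) (2*m)) ×ˢ (Set.Icc (-(2*m)) (2*m))) :=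
    (Set.finite_Icc _ _).prod ((Set.finite_Icc _ _).prod ((Set.finite_Icc _ _).prod (Set.finite_Icc _ _)))
  refine (this.preimage ((QuaternionAlgebra.equivProd (-1:ℤ) (-1) (-1)).injective.injOn)).subset ?_
  intro x hx
  have hx : nm x = m := hx
  have h1 := form_nonneg x.re x.imI
  have h2 := form_nonneg x.imJ x.imK
  unfold nm at hx
  have a1 := form_bound (a := x.re) (b := x.imI) (m := m) (by linarith)
  have a2 := form_bound (a := x.imJ) (b := x.imK) (m := m) (by linarith)
  simp only [Set.mem_preimage, QuaternionAlgebra.equivProd_apply, Set.mem_prod, Set.mem_Icc]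
  tauto

/-- elements of norm m -/
noncomputable def sph (m : ℤ) : Finset HQ := (fin_nm m).toFinset

lemma mem_sph {m : ℤ} {x : HQ} : x ∈ sph m ↔ nm x = m := by simp [sph]

/-- Euclid in the plane -/
lemma euclid2_aux {a b n : ℤ} (h0 : 0 ≤ b) (h1 : b ≤ a) (h2 : a < n) :
    3*(a^2-a*b+b^2) ≤ n^2 ∨ 3*((a-n)^2-(a-n)*b+b^2) ≤ n^2 ∨ 3*((a-n)^2-(a-n)*(b-n)+(b-n)^2) ≤ n^2 := by
  by_contra! h
  obtain ⟨x, y, z⟩ := h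
  have hn : 0 < n := by omega
  have e1 : 0 ≤ (n-a) * (3*(a^2-a*b+b^2) - n^2) := mul_nonneg (by omega) (by omega)
  have e2 : 0 ≤ (a-b) * (3*((a-n)^2-(a-n)*b+b^2) - n^2) := mul_nonneg (by omega) (by omega)
  have e3 : 0 ≤ b * (3*((a-n)^2-(a-n)*(b-n)+(b-n)^2) - n^2) := mul_nonneg (by omega) (by omega)
  have e4 : 0 < (n-a) * (3*(a^2-a*b+b^2) - n^2) := mul_pos (by omega) (by omega)
  have key : (n-a) * (3*(a^2-a*b+b^2) - n^2) + (a-b) * (3*((a-n)^2-(a-n)*b+b^2) - n^2) + b * (3*((a-n)^2-(a-n)*(b-n)+(b-n)^2) - n^2)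
    = - n * ((3*a-2*n)^2 - (3*a-2*n)*(3*b-n) + (3*b-n)^2) / 3 := by
    symm
    apply Int.ediv_eq_of_eq_mul_right (by norm_num)
    ring
  have k2 := mul_nonneg hn.le (form_nonneg (3*a-2*n) (3*b-n))
  have : - n * ((3*a-2*n)^2 - (3*a-2*n)*(3*b-n) + (3*b-n)^2) / 3 ≤ 0 := by
    apply Int.ediv_nonpos_of_nonpos_of_neg <;> linarith
  linarith

lemma euclid2 (a b n : ℤ) (hn : 0 < n) : ∃ c d : ℤ,
    3*((a-c*n)^2-(a-c*n)*(b-d*n)+(b-d*n)^2) ≤ n^2 := by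
  have ha := Int.emod_add_mul_ediv a n
  have hb := Int.emod_add_mul_ediv b n
  have a0 := Int.emod_nonneg a hn.ne'
  have b0 := Int.emod_nonneg b hn.ne'
  have a1 := Int.emod_lt_of_pos a hn
  have b1 := Int.emod_lt_of_pos b hn
  set r := a % n
  set s := b % n
  set q := a / n
  set t := b / n
  have ea : a = r + n*q := by linarith
  have eb : b = s + n*t := by linarith
  rcases le_total s r with h | h
  · rcases euclid2_aux b0 h a1 with h | h | h
    · refine ⟨q, t, le_trans (le_of_eq ?_) h⟩; rw [ea, eb]; ring
    · refine ⟨q+1, t, le_trans (le_of_eq ?_) h⟩; rw [ea, eb]; ring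
    · refine ⟨q+1, t+1, le_trans (le_of_eq ?_) h⟩; rw [ea, eb]; ring
  · rcases euclid2_aux a0 h b1 with h | h | h
    · refine ⟨q, t, le_trans (le_of_eq ?_) h⟩; rw [ea, eb]; ring
    · refine ⟨q, t+1, le_trans (le_of_eq ?_) h⟩; rw [ea, eb]; ring
    · refine ⟨q+1, t+1, le_trans (le_of_eq ?_) h⟩; rw [ea, eb]; ring

lemma euclid (x g : HQ) (hg : 0 < nm g) : ∃ q : HQ, nm (x - q*g) < nm g := by
  obtain ⟨c, d, h1⟩ := euclid2 (x * star g).re (x * star g).imI (nm g) hg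
  obtain ⟨e, f, h2⟩ := euclid2 (x * star g).imJ (x * star g).imK (nm g) hg
  refine ⟨⟨c,d,e,f⟩, ?_⟩
  set q : HQ := ⟨c,d,e,f⟩ with hq
  have h3 : (x - q*g) * star g = x * star g - q * ((nm g : ℤ) : HQ) := by
    rw [sub_mul, mul_assoc, mul_star_nm]
  have h4 : nm (x - q*g) * nm g = nm (x * star g - q * ((nm g : ℤ) : HQ)) := by
    rw [← h3, nm_mul, nm_star]
  have h5 : 3 * nm (x * star g - q * ((nm g : ℤ) : HQ)) ≤ 2 * nm g ^2 := by
    generalize x * star g = y at *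
    generalize nm g = n at *
    have : nm (y - q * ((n : ℤ) : HQ)) = ((y.re - c*n)^2 - (y.re - c*n)*(y.imI-d*n) + (y.imI-d*n)^2) + 
      ((y.imJ - e*n)^2 - (y.imJ - e*n)*(y.imK-f*n) + (y.imK-f*n)^2) := by
      simp [nm, hq]
    rw [this]; linarith
  by_contra! hcon
  nlinarith

/-- principal left ideals -/
lemma principal (I : HQ → Prop) (hsub : ∀ x y, I x → I y → I (x - y)) (hmul : ∀ q x, I x → I (q * x))
    (p : ℕ) (hp : p.Prime) (hpI : I (p : HQ)) (hdiv : ∀ x, I x → (p:ℤ) ∣ nm x)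
    (x0 : HQ) (hx0 : I x0) (hx0' : ¬ ∃ y : HQ, x0 = y * (p : HQ)) :
    ∃ g : HQ, nm g = p ∧ ∀ x, I x ↔ ∃ y, x = y * g := by
  classical
  have hnp : nm (p : HQ) = p^2 := by simp [nm]
  have hex : ∃ n : ℕ, 0 < n ∧ ∃ g, I g ∧ nm g = n := ⟨p^2, by have := hp.pos; positivity, p, hpI, by rw [hnp]; push_cast; rfl⟩
  obtain ⟨hn0, g, hgI, hgn⟩ := Nat.find_spec hex
  have hmin := fun m => Nat.find_min hex (m := m)
  set n := Nat.find hex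
  have hgen : ∀ x, I x → ∃ y, x = y * g := by
    intro x hx
    obtain ⟨q, hq⟩ := euclid x g (by rw [hgn]; exact_mod_cast hn0)
    refine ⟨q, ?_⟩
    have hI := hsub _ _ hx (hmul q g hgI)
    by_contra hne
    have hnz : nm (x - q*g) ≠ 0 := fun h => hne (sub_eq_zero.mp (nm_eq_zero h))
    have h0 := nm_nonneg (x - q*g)
    refine hmin (nm (x-q*g)).toNat (by omega) ⟨by omega, _, hI, by omega⟩
  have hiff : ∀ x, I x ↔ ∃ y, x = y * g := fun x => ⟨hgen x, by rintro ⟨y, rfl⟩; exact hmul _ _ hgI⟩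
  refine ⟨g, ?_, hiff⟩
  obtain ⟨d, hd⟩ := hgen _ hpI
  have h1 : nm d * nm g = p^2 := by rw [← nm_mul, ← hd, hnp]
  have h2 : (p:ℤ) ∣ nm g := hdiv _ hgI
  obtain ⟨e, he⟩ := h2
  have hp0 : (p:ℤ) ≠ 0 := by exact_mod_cast hp.ne_zero
  have h3 : nm d * e = p := by
    apply mul_left_cancel₀ hp0
    rw [← sq, ← h1, he]; ring
  have hpp : Prime (p:ℤ) := Nat.prime_iff_prime_int.mp hp
  have hd0 := nm_nonneg d
  have hdn : nm d ∣ (p:ℤ) := ⟨e, h3.symm⟩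
  have : (nm d).toNat ∣ p := by
    have : ((nm d).toNat : ℤ) ∣ p := by rwa [Int.toNat_of_nonneg hd0]
    exact_mod_cast this
  rcases (Nat.dvd_prime hp).mp this with h | h
  · exfalso
    have hd1 : nm d = 1 := by omega
    apply hx0'
    obtain ⟨y, hy⟩ := hgen _ hx0
    refine ⟨y * star d, ?_⟩
    rw [hd, mul_assoc, ← mul_assoc (star d), star_mul_nm, hd1, hy]; simp
  · have hdp : nm d = p := by omega
    rw [hdp] at h1
    apply mul_left_cancel₀ hp0
    rw [h1]; ring

/-- the left ideal killing the vector (s,t) mod p -/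
def Iv (p : ℕ) (w s t : ZMod p) (x : HQ) : Prop :=
  ((x.re : ZMod p) + x.imI * w) * s = (x.imJ + x.imK * w) * t ∧
  ((x.imJ : ZMod p) + x.imK * (-1-w)) * s + (x.re + x.imI * (-1-w)) * t = 0

lemma Iv_sub (p : ℕ) (w s t : ZMod p) (x y : HQ) (hx : Iv p w s t x) (hy : Iv p w s t y) : Iv p w s t (x-y) := by
  obtain ⟨h1, h2⟩ := hx
  obtain ⟨h3, h4⟩ := hy
  constructor
  · simp; linear_combination h1 - h3
  · simp; linear_combination h2 - h4

lemma Iv_mul (p : ℕ) (w s t : ZMod p) (hw : w^2+w+1=0) (q x : HQ) (hx : Iv p w s t x) : Iv p w s t (q*x) := by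
  obtain ⟨h1, h2⟩ := hx
  constructor
  · simp
    linear_combination ((q.re : ZMod p) + q.imI * w) * h1 - ((q.imJ : ZMod p) + q.imK * w) * h2 +
      (-q.imI*x.imI*s + q.imI*x.imK*t - x.imI*q.imK*t - x.imK*q.imK*s)*hw
  · simp
    linear_combination ((q.re : ZMod p) + q.imI * (-1-w)) * h2 + ((q.imJ : ZMod p) + q.imK * (-1-w)) * h1 +
      (-q.imI*x.imK*s - q.imI*x.imI*t - x.imK*q.imK*t + x.imI*q.imK*s)*hw

lemma nm_cast (p : ℕ) (w : ZMod p) (hw : w^2+w+1=0) (x : HQ) : ((nm x : ℤ) : ZMod p) =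
    ((x.re : ZMod p) + x.imI * w) * (x.re + x.imI * (-1-w)) + (x.imJ + x.imK * w) * ((x.imJ : ZMod p) + x.imK * (-1-w)) := by
  simp only [nm]; push_cast
  linear_combination (x.imI^2 + x.imK^2 : ZMod p) * hw

def DvdP (p : ℕ) (x : HQ) : Prop := ∃ y : HQ, x = y * (p : HQ)

lemma dvdP_iff (p : ℕ) (x : HQ) : DvdP p x ↔
    (x.re : ZMod p) = 0 ∧ (x.imI : ZMod p) = 0 ∧ (x.imJ : ZMod p) = 0 ∧ (x.imK : ZMod p) = 0 := by
  simp only [ZMod.intCast_zmod_eq_zero_iff_dvd] 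
  constructor
  · rintro ⟨y, rfl⟩
    simp
  · rintro ⟨⟨a, ha⟩, ⟨b, hb⟩, ⟨c, hc⟩, ⟨d, hd⟩⟩
    refine ⟨⟨a,b,c,d⟩, ?_⟩
    ext <;> simp [ha, hb, hc, hd] <;> ring

def vs (p : ℕ) : Option (ZMod p) → ZMod p
  | none => 0
  | some _ => 1
def vt (p : ℕ) : Option (ZMod p) → ZMod p
  | none => 1
  | some t => t

def J (p : ℕ) (w : ZMod p) (o : Option (ZMod p)) (x : HQ) : Prop := Iv p w (vs p o) (vt p o) x

lemma J_dvdP (p : ℕ) (w : ZMod p) (o : Option (ZMod p)) (x : HQ) (h : DvdP p x) : J p w o x := by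
  rw [dvdP_iff] at h
  obtain ⟨h1, h2, h3, h4⟩ := h
  simp [J, Iv, h1, h2, h3, h4]

lemma w_ne (p : ℕ) [Fact p.Prime] (hp3 : p % 3 = 1) (w : ZMod p) (hw : w^2+w+1=0) : 2*w+1 ≠ 0 := by
  intro h
  have h3 : ((3:ℕ):ZMod p) = 0 := by push_cast; linear_combination 4 * hw - (2*w+1)*h
  rw [ZMod.natCast_eq_zero_iff] at h3
  have := (Nat.prime_dvd_prime_iff_eq (Fact.out : p.Prime) Nat.prime_three).mp h3
  omega

lemma J_exists_unique (p : ℕ) [Fact p.Prime] (hp3 : p % 3 = 1) (w : ZMod p) (hw : w^2+w+1=0) (x : HQ)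
    (hx : (p:ℤ) ∣ nm x) (hd : ¬ DvdP p x) : ∃! o, J p w o x := by
  have h0 : ((nm x : ℤ) : ZMod p) = 0 := (ZMod.intCast_zmod_eq_zero_iff_dvd _ _).mpr hx
  rw [nm_cast p w hw] at h0
  rw [dvdP_iff] at hd
  have hw' := w_ne p hp3 w hw
  have hne : ¬ (((x.re : ZMod p) + x.imI * w) = 0 ∧ (x.re + x.imI * (-1-w) : ZMod p) = 0 ∧ (x.imJ + x.imK * w : ZMod p) = 0 ∧
     ((x.imJ : ZMod p) + x.imK * (-1-w)) = 0) := by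
    rintro ⟨h1, h2, h3, h4⟩
    apply hd
    have hI : (x.imI : ZMod p) = 0 := by
      apply (mul_eq_zero.mp (?_ : (x.imI : ZMod p) * (2*w+1) = 0)).resolve_right hw'
      linear_combination h1 - h2
    have hK : (x.imK : ZMod p) = 0 := by
      apply (mul_eq_zero.mp (?_ : (x.imK : ZMod p) * (2*w+1) = 0)).resolve_right hw'
      linear_combination h3 - h4
    rw [hI] at h1; rw [hK] at h3
    refine ⟨by simpa using h1, hI, by simpa using h3, hK⟩
  unfold J Iv
  generalize ((x.re : ZMod p) + x.imI * w) = A at *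
  generalize (x.re + x.imI * (-1-w) : ZMod p) = A' at *
  generalize (x.imJ + x.imK * w : ZMod p) = B at *
  generalize ((x.imJ : ZMod p) + x.imK * (-1-w)) = B' at *
  by_cases hB : B = 0
  · by_cases hA' : A' = 0
    · refine ⟨none, by simp [vs, vt, hB, hA'], ?_⟩
      rintro (_ | t) h
      · rfl
      · simp [vs, vt] at h; grind
    · refine ⟨some (-B'/A'), ?_, ?_⟩
      · simp only [vs, vt]; constructor
        · grind
        · field_simp; ring
      · rintro (_ | t) h
        · simp [vs, vt] at h; grind
        · simp [vs, vt] at h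
          congr 1
          field_simp; grind
  · refine ⟨some (A/B), ?_, ?_⟩
    · simp only [vs, vt]; constructor
      · field_simp
      · field_simp; grind
    · rintro (_ | t) h
      · simp [vs, vt] at h; grind
      · simp [vs, vt] at h
        congr 1
        field_simp; grind

lemma J_dvd_nm (p : ℕ) [Fact p.Prime] (w : ZMod p) (hw : w^2+w+1=0) (o) (x : HQ) (h : J p w o x) :
    (p:ℤ) ∣ nm x := by
  rw [← ZMod.intCast_zmod_eq_zero_iff_dvd, nm_cast p w hw]
  unfold J Iv at h
  rcases o with _ | t
  · simp [vs, vt] at h; grind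
  · simp [vs, vt] at h; grind

lemma J_principal (p : ℕ) [Fact p.Prime] (w : ZMod p) (hw : w^2+w+1=0) (o) :
    ∃ g : HQ, nm g = p ∧ ∀ x, J p w o x ↔ ∃ y, x = y * g := by
  obtain ⟨w', rfl⟩ := ZMod.intCast_surjective w
  obtain ⟨s', hs⟩ := ZMod.intCast_surjective (vs p o)
  obtain ⟨t', ht⟩ := ZMod.intCast_surjective (vt p o)
  refine principal (J p w' o) (Iv_sub p _ _ _) (Iv_mul p _ _ _ hw) p Fact.out
    (J_dvdP p _ _ _ ⟨1, by simp⟩) (J_dvd_nm p _ hw o)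
    (if o = none then ⟨1+w', 1, 0, 0⟩ else ⟨-w', 1, t'*w', -t'⟩) ?_ ?_
  · rcases o with _ | t
    · simp [J, Iv, vs, vt]
    · simp [J, Iv, vs, vt] at *
      rw [ht]; ring
  · change ¬ DvdP p _
    rw [dvdP_iff]
    split_ifs <;> simp

noncomputable def r (m : ℤ) : ℕ := (sph m).card

open Classical in
lemma card_J (p : ℕ) [Fact p.Prime] (w : ZMod p) (hw : w^2+w+1=0) (o) (m : ℤ) :
    ((sph (p*m)).filter (J p w o)).card = r m := by
  obtain ⟨g, hg, hJ⟩ := J_principal p w hw o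
  have hp0 : (p:ℤ) ≠ 0 := by exact_mod_cast (Fact.out : p.Prime).ne_zero
  symm
  refine Finset.card_bij (fun y _ => y * g) ?_ ?_ ?_
  · intro y hy
    rw [mem_sph] at hy
    simp only [Finset.mem_filter, mem_sph, nm_mul, hg, hy, hJ]
    exact ⟨by ring, y, rfl⟩
  · intro a _ b _ hab
    have : nm (a - b) * nm g = 0 := by rw [← nm_mul, sub_mul, sub_eq_zero.mpr hab, nm_zero]
    rw [hg] at this
    exact sub_eq_zero.mp (nm_eq_zero ((mul_eq_zero.mp this).resolve_right hp0))
  · intro b hb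
    simp only [Finset.mem_filter, mem_sph, hJ] at hb
    obtain ⟨h1, y, rfl⟩ := hb
    refine ⟨y, ?_, rfl⟩
    rw [mem_sph]
    rw [nm_mul, hg] at h1
    apply mul_left_cancel₀ hp0
    rw [← h1]; ring

open Classical in
lemma card_D (p : ℕ) [Fact p.Prime] (m : ℤ) :
    ((sph (p*(p*m))).filter (DvdP p)).card = r m := by
  have hp0 : (p:ℤ) ≠ 0 := by exact_mod_cast (Fact.out : p.Prime).ne_zero
  have hnp : nm (p : HQ) = p^2 := by simp [nm]
  symm
  refine Finset.card_bij (fun y _ => y * (p : HQ)) ?_ ?_ ?_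
  · intro y hy
    rw [mem_sph] at hy
    simp only [Finset.mem_filter, mem_sph, nm_mul, hy, hnp]
    exact ⟨by ring, y, rfl⟩
  · intro a _ b _ hab
    have : nm (a - b) * nm (p : HQ) = 0 := by rw [← nm_mul, sub_mul, sub_eq_zero.mpr hab, nm_zero]
    rw [hnp] at this
    exact sub_eq_zero.mp (nm_eq_zero ((mul_eq_zero.mp this).resolve_right (pow_ne_zero _ hp0)))
  · intro b hb
    simp only [Finset.mem_filter, mem_sph] at hb
    obtain ⟨h1, y, rfl⟩ := hb
    refine ⟨y, ?_, rfl⟩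
    rw [mem_sph]
    rw [nm_mul, hnp] at h1
    apply mul_left_cancel₀ (pow_ne_zero 2 hp0)
    linarith

open Classical in
lemma hecke (p : ℕ) [Fact p.Prime] (hp3 : p % 3 = 1) (w : ZMod p) (hw : w^2+w+1=0) (m : ℤ) :
    (p+1) * r m = r (p*m) + p * ((sph (p*m)).filter (DvdP p)).card := by
  have h1 : ∑ o : Option (ZMod p), ((sph (p*m)).filter (J p w o)).card = (p+1) * r m := by
    simp [card_J p w hw]
  rw [← h1]
  simp only [Finset.card_filter]
  rw [Finset.sum_comm, r, Finset.card_eq_sum_ones, Finset.mul_sum, ← Finset.sum_add_distrib]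
  apply Finset.sum_congr rfl
  intro x hx
  rw [mem_sph] at hx
  rw [← Finset.card_filter]
  by_cases hd : DvdP p x
  · rw [Finset.filter_true_of_mem (fun o _ => J_dvdP p w o x hd)]
    simp [hd]; ring
  · obtain ⟨o, ho, hu⟩ := J_exists_unique p hp3 w hw x ⟨m, hx⟩ hd
    have hone : (Finset.univ.filter (fun o => J p w o x)).card = 1 := by
      refine Finset.card_eq_one.mpr ⟨o, ?_⟩
      ext o'
      simp only [Finset.mem_filter, Finset.mem_univ, true_and, Finset.mem_singleton]
      exact ⟨hu o', by rintro rfl; exact ho⟩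
    simp [if_neg hd, hone]

lemma exists_w (p : ℕ) [Fact p.Prime] (hp3 : p % 3 = 1) : ∃ w : ZMod p, w^2+w+1=0 := by
  have hp : p.Prime := Fact.out
  have hcard : Nat.card (ZMod p)ˣ = p - 1 := by
    rw [Nat.card_eq_fintype_card, ZMod.card_units]
  have : Fact (Nat.Prime 3) := ⟨Nat.prime_three⟩
  obtain ⟨x, hx⟩ := exists_prime_orderOf_dvd_card' (G := (ZMod p)ˣ) 3 (by rw [hcard]; omega)
  refine ⟨x, ?_⟩
  have h3 : (x:ZMod p)^3 = 1 := by
    have := pow_orderOf_eq_one x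
    rw [hx] at this
    rw [← Units.val_pow_eq_pow_val, this, Units.val_one]
  have hne : (x:ZMod p) - 1 ≠ 0 := by
    intro h
    have : x = 1 := by ext; simpa [sub_eq_zero] using h
    rw [this] at hx; simp at hx
  apply (mul_eq_zero.mp (?_ : ((x:ZMod p)-1) * _ = 0)).resolve_left hne
  linear_combination h3

lemma r_pow (p : ℕ) (hp : p.Prime) (hp3 : p % 3 = 1) (m : ℤ) (hm : ¬ (p:ℤ) ∣ m) (k : ℕ) :
    ((p:ℤ)-1) * r (p^k*m) = (p^(k+1)-1) * r m := by
  classical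
  have : Fact p.Prime := ⟨hp⟩
  have hp0 : (p:ℤ) ≠ 0 := by exact_mod_cast hp.ne_zero
  obtain ⟨w, hw⟩ := exists_w p hp3
  have h1 : (p+1) * r m = r (p*m) := by
    have := hecke p hp3 w hw m
    rw [Finset.card_eq_zero.mpr] at this
    · simpa using this
    · apply Finset.filter_false_of_mem
      rintro x hx ⟨y, rfl⟩
      rw [mem_sph, nm_mul, show nm (p : HQ) = p^2 by simp [nm]] at hx
      apply hm
      refine ⟨nm y, mul_left_cancel₀ hp0 ?_⟩
      rw [← hx]; ring
  have h2 : ∀ k : ℕ, (p+1) * r (p^(k+1)*m) = r (p^(k+2)*m) + p * r (p^k*m) := by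
    intro k
    have := hecke p hp3 w hw (p^(k+1)*m)
    rw [show (p:ℤ) * (p^(k+1)*m) = p * (p * (p^k*m)) by ring, card_D] at this
    rw [this]; congr 2; ring
  induction k using Nat.strong_induction_on with
  | _ k ih =>
    match k with
    | 0 => simp
    | 1 =>
      rw [pow_one, ← h1]; push_cast; ring
    | k+2 =>
      have a1 := ih (k+1) (by omega)
      have a2 := ih k (by omega)
      have a3 : ((p:ℤ)+1) * r (p^(k+1)*m) = r (p^(k+2)*m) + p * r (p^k*m) := by exact_mod_cast h2 k
      linear_combination (-(p:ℤ)+1)*a3 + (p+1)*a1 - p*a2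

end A3aux
namespace A3aux

def ff (μ : YoungDiagram) (i : ℕ) : ℤ := μ.rowLen i - i

lemma ff_strictAnti (μ : YoungDiagram) : StrictAnti (ff μ) := by
  intro i j h
  have := μ.rowLen_anti i j h.le
  unfold ff; omega

lemma cell_iff (μ : YoungDiagram) (i j : ℕ) : j < μ.rowLen i ↔ i < μ.colLen j := by
  rw [← YoungDiagram.mem_iff_lt_rowLen, YoungDiagram.mem_iff_lt_colLen]

def SS (μ : YoungDiagram) : Set ℤ := Set.range (ff μ)

lemma rowLen_zero (μ : YoungDiagram) (i : ℕ) (h : μ.colLen 0 ≤ i) : μ.rowLen i = 0 := by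
  have := cell_iff μ i 0
  omega

lemma notMem_SS (μ : YoungDiagram) (j : ℕ) : (j:ℤ) + 1 - μ.colLen j ∉ SS μ := by
  rintro ⟨i, hi⟩
  have := cell_iff μ i j
  unfold ff at hi
  omega

lemma exists_of_notMem (μ : YoungDiagram) (c : ℤ) (hc : c ∉ SS μ) : ∃ j : ℕ, c = (j:ℤ) + 1 - μ.colLen j := by
  classical
  have hex : ∃ i, ff μ i < c := by
    refine ⟨μ.colLen 0 + (1-c).toNat, ?_⟩
    unfold ff
    rw [rowLen_zero μ _ (by omega)]; push_cast; omega
  have h1 := Nat.find_spec hex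
  have h2 := fun m => Nat.find_min hex (m := m)
  set i := Nat.find hex
  have h1' : (μ.rowLen i : ℤ) - i < c := h1
  refine ⟨(c + i - 1).toNat, ?_⟩
  set j := (c + i - 1).toNat with hj
  have hj' : (j:ℤ) = c + i - 1 := by omega
  have a1 : ¬ i < μ.colLen j := by rw [← cell_iff]; omega
  have a2 : ¬ μ.colLen j < i := by
    intro h
    have h3 := h2 _ h
    have h4 : ff μ (μ.colLen j) ≠ c := fun h => hc ⟨_, h⟩
    have h5 := h2 (i-1) (by omega)
    have h6 : ff μ (i-1) ≠ c := fun h => hc ⟨_, h⟩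
    have h7 := μ.rowLen_anti (μ.colLen j) (i-1) (by omega)
    have h8 := cell_iff μ (μ.colLen j) j
    unfold ff at *
    omega
  omega

lemma core_iff (μ : YoungDiagram) : μ.IsThreeCore ↔ ∀ z ∈ SS μ, z - 3 ∈ SS μ := by
  constructor
  · rintro h z ⟨i, rfl⟩
    by_contra hc
    obtain ⟨j, hj⟩ := exists_of_notMem μ _ hc
    have h1 := cell_iff μ i j
    unfold ff at hj
    have h2 : j < μ.rowLen i := by omega
    refine h (i,j) ((YoungDiagram.mem_cells _).mpr (YoungDiagram.mem_iff_lt_rowLen.mpr h2)) ?_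
    simp only [YoungDiagram.hookLength]
    omega
  · rintro h ⟨i, j⟩ hc ⟨k, hk⟩
    have h2 := YoungDiagram.mem_iff_lt_rowLen.mp ((YoungDiagram.mem_cells _).mp hc)
    have h1 := cell_iff μ i j
    simp only [YoungDiagram.hookLength] at hk
    have h3 : ∀ k : ℕ, ff μ i - 3*k ∈ SS μ := by
      intro k
      induction k with
      | zero => simp [SS]
      | succ k ih => have := h _ ih; convert this using 1; push_cast; ring
    apply notMem_SS μ j
    convert h3 k using 1
    unfold ff; omega

lemma SS_inj {μ ν : YoungDiagram} (h : SS μ = SS ν) : μ = ν := by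
  have h1 : StrictMono (fun i => - ff μ i) := fun i j hij => neg_lt_neg (ff_strictAnti μ hij)
  have h2 : StrictMono (fun i => - ff ν i) := fun i j hij => neg_lt_neg (ff_strictAnti ν hij)
  have h3 : (fun i => - ff μ i) = (fun i => - ff ν i) := by
    rw [← h1.range_inj h2]
    have e : ∀ μ, Set.range (fun i => - ff μ i) = (fun x => -x) '' SS μ := by
      intro μ; unfold SS; rw [← Set.range_comp]; rfl
    rw [e, e, h]
  ext ⟨i, j⟩
  have h4 := congrFun h3 i
  simp only [ff] at h4
  rw [YoungDiagram.mem_cells, YoungDiagram.mem_cells, YoungDiagram.mem_iff_lt_rowLen, YoungDiagram.mem_iff_lt_rowLen]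
  omega

def S3 (a b c : ℤ) : Set ℤ := {z | (z%3=0 → z ≤ 3*a) ∧ (z%3=1 → z ≤ 3*b+1) ∧ (z%3=2 → z ≤ 3*c+2)}

lemma exists_top (S : Set ℤ) (hS : ∀ z ∈ S, z - 3 ∈ S) (K L : ℤ) (hK : ∀ z ∈ S, z ≤ K) (hL : ∀ z ≤ L, z ∈ S) (r : ℤ) :
    ∃ a : ℤ, ∀ m, 3*m+r ∈ S ↔ m ≤ a := by
  obtain ⟨a, ha, hmax⟩ := Int.exists_greatest_of_bdd (P := fun m => 3*m+r ∈ S)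
    ⟨|K| + |r|, fun z hz => by have := hK _ hz; have := abs_nonneg K; have := abs_nonneg r; have := le_abs_self K; have := neg_abs_le r; omega⟩
    ⟨-(|L|+|r|), hL _ (by have := abs_nonneg L; have := abs_nonneg r; have := neg_abs_le L; have := le_abs_self r; omega)⟩
  refine ⟨a, fun m => ⟨hmax m, fun h => ?_⟩⟩
  obtain ⟨k, rfl⟩ : ∃ k : ℕ, m = a - k := ⟨(a-m).toNat, by omega⟩
  clear h
  induction k with
  | zero => simpa using ha
  | succ k ih => have := hS _ ih; convert this using 1; push_cast; ring

lemma core_S3 (μ : YoungDiagram) (h : μ.IsThreeCore) : ∃ a b c, SS μ = S3 a b c := by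
  rw [core_iff] at h
  have hK : ∀ z ∈ SS μ, z ≤ μ.rowLen 0 := by
    rintro z ⟨i, rfl⟩
    have := μ.rowLen_anti 0 i (by omega)
    unfold ff; omega
  have hL : ∀ z ≤ -(μ.colLen 0 : ℤ), z ∈ SS μ := by
    intro z hz
    refine ⟨(-z).toNat, ?_⟩
    unfold ff
    rw [rowLen_zero μ _ (by omega)]; omega
  obtain ⟨a, ha⟩ := exists_top _ h _ _ hK hL 0
  obtain ⟨b, hb⟩ := exists_top _ h _ _ hK hL 1
  obtain ⟨c, hc⟩ := exists_top _ h _ _ hK hL 2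
  refine ⟨a, b, c, ?_⟩
  ext z
  simp only [S3, Set.mem_ofPred_eq]
  have h3 : z % 3 = 0 ∨ z % 3 = 1 ∨ z % 3 = 2 := by omega
  rcases h3 with h3 | h3 | h3
  · have := ha (z/3); rw [show 3*(z/3)+0 = z by omega] at this; rw [this]; omega
  · have := hb (z/3); rw [show 3*(z/3)+1 = z by omega] at this; rw [this]; omega
  · have := hc (z/3); rw [show 3*(z/3)+2 = z by omega] at this; rw [this]; omega

lemma S3_core (μ : YoungDiagram) (a b c) (h : SS μ = S3 a b c) : μ.IsThreeCore := by
  rw [core_iff, h]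
  intro z hz
  simp only [S3, Set.mem_ofPred_eq] at *
  omega

lemma sum3 (g : ℕ → ℤ) (Q : ℕ) : ∑ t ∈ Finset.range (3*Q), g t =
    ∑ q ∈ Finset.range Q, g (3*q) + ∑ q ∈ Finset.range Q, g (3*q+1) + ∑ q ∈ Finset.range Q, g (3*q+2) := by
  induction Q with
  | zero => simp
  | succ Q ih =>
    rw [show 3*(Q+1) = 3*Q+1+1+1 by ring]
    simp only [Finset.sum_range_succ, ih]
    ring

lemma sumB (n : ℕ) (c e : ℤ) (Q : ℕ) (h : n ≤ Q) :
    2 * ∑ q ∈ Finset.range Q, (if n ≤ q then c + e * q else 0) = 2*(Q-n)*c + e*(Q*(Q-1) - n*(n-1)) := by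
  induction Q, h using Nat.le_induction with
  | base =>
    rw [Finset.sum_eq_zero]
    · ring
    · intro q hq; rw [if_neg]; simpa using hq
  | succ Q hQ ih =>
    rw [Finset.sum_range_succ, mul_add, ih, if_pos hQ]; push_cast; ring

open Classical in
/-- weighted count for `S3` -/
lemma sumS3 (a b c : ℤ) (k Q : ℕ) (e f : ℤ) (ha : a ≤ k) (hb : b ≤ k) (hc : c ≤ k) 
   (ha' : k ≤ a + Q) (hb' : k ≤ b + Q) (hc' : k ≤ c + Q) :
   2 * ∑ t ∈ Finset.range (3*Q), (if ((3*k+2 : ℕ):ℤ) - t ∈ S3 a b c then e + f * (((3*k+2:ℕ):ℤ) - t) else 0) =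
   (2*(Q-(k-c))*(e+f*(3*k+2)) - 3*f*(Q*(Q-1) - (k-c)*(k-c-1))) +
   (2*(Q-(k-b))*(e+f*(3*k+1)) - 3*f*(Q*(Q-1) - (k-b)*(k-b-1))) +
   (2*(Q-(k-a))*(e+f*(3*k)) - 3*f*(Q*(Q-1) - (k-a)*(k-a-1))) := by
  obtain ⟨na, hna⟩ : ∃ n : ℕ, (n:ℤ) = k - a := ⟨(k-a).toNat, by omega⟩
  obtain ⟨nb, hnb⟩ : ∃ n : ℕ, (n:ℤ) = k - b := ⟨(k-b).toNat, by omega⟩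
  obtain ⟨nc, hnc⟩ : ∃ n : ℕ, (n:ℤ) = k - c := ⟨(k-c).toNat, by omega⟩
  have h1 := sumB nc (e+f*(3*k+2)) (-3*f) Q (by omega)
  have h2 := sumB nb (e+f*(3*k+1)) (-3*f) Q (by omega)
  have h3 := sumB na (e+f*(3*k)) (-3*f) Q (by omega)
  rw [hna] at h3
  rw [hnb] at h2
  rw [hnc] at h1
  rw [sum3, mul_add, mul_add]
  have e1 : ∀ q : ℕ, (((3*k+2 : ℕ):ℤ) - (3*q:ℕ) ∈ S3 a b c) ↔ nc ≤ q := by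
    intro q; simp only [S3, Set.mem_ofPred_eq]; push_cast; omega
  have e2 : ∀ q : ℕ, (((3*k+2 : ℕ):ℤ) - (3*q+1:ℕ) ∈ S3 a b c) ↔ nb ≤ q := by
    intro q; simp only [S3, Set.mem_ofPred_eq]; push_cast; omega
  have e3 : ∀ q : ℕ, (((3*k+2 : ℕ):ℤ) - (3*q+2:ℕ) ∈ S3 a b c) ↔ na ≤ q := by
    intro q; simp only [S3, Set.mem_ofPred_eq]; push_cast; omega
  simp only [e1, e2, e3]
  have g1 : ∀ q : ℕ, e + f * (((3*k+2 : ℕ):ℤ) - (3*q:ℕ)) = (e+f*(3*k+2)) + (-3*f)*q := by intro q; push_cast; ring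
  have g2 : ∀ q : ℕ, e + f * (((3*k+2 : ℕ):ℤ) - (3*q+1:ℕ)) = (e+f*(3*k+1)) + (-3*f)*q := by intro q; push_cast; ring
  have g3 : ∀ q : ℕ, e + f * (((3*k+2 : ℕ):ℤ) - (3*q+2:ℕ)) = (e+f*(3*k)) + (-3*f)*q := by intro q; push_cast; ring
  simp only [g1, g2, g3]
  rw [h1, h2, h3]; ring

open Classical in
lemma sum_enum (μ : YoungDiagram) (K N : ℕ) (hK : μ.rowLen 0 ≤ K) (hN : μ.colLen 0 ≤ N) (w : ℤ → ℤ) :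
    ∑ t ∈ Finset.range (K+N), (if (K:ℤ) - t ∈ SS μ then w (K - t) else 0) = ∑ i ∈ Finset.range N, w (ff μ i) := by
  rw [← Finset.sum_filter]
  symm
  have hle : ∀ i, ff μ i ≤ K - i := by
    intro i
    have := μ.rowLen_anti 0 i (by omega)
    unfold ff; omega
  have hNN : ff μ N = -N := by unfold ff; rw [rowLen_zero μ N hN]; simp
  refine Finset.sum_bij (fun i _ => ((K:ℤ) - ff μ i).toNat) ?_ ?_ ?_ ?_
  · intro i hi
    have hi : i < N := by simpa using hi
    have h1 := hle i
    have h2 := ff_strictAnti μ hi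
    simp only [Finset.mem_filter, Finset.mem_range]
    refine ⟨by omega, i, by omega⟩
  · intro i hi j hj h
    have h1 := hle i
    have h2 := hle j
    apply (ff_strictAnti μ).injective
    omega
  · intro t ht
    simp only [Finset.mem_filter, Finset.mem_range] at ht
    obtain ⟨h1, i, hi⟩ := ht
    refine ⟨i, ?_, by omega⟩
    rw [Finset.mem_range, ← (ff_strictAnti μ).lt_iff_gt]
    omega
  · intro i hi
    have h1 := hle i
    congr 1; omega

lemma card_eq_sum (μ : YoungDiagram) (N : ℕ) (hN : μ.colLen 0 ≤ N) : μ.card = ∑ i ∈ Finset.range N, μ.rowLen i := by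
  have : μ.cells = ((Finset.range N).sigma (fun i => Finset.range (μ.rowLen i))).map (Equiv.sigmaEquivProd ℕ ℕ).toEmbedding := by
    ext ⟨i, j⟩
    simp only [YoungDiagram.mem_cells, YoungDiagram.mem_iff_lt_rowLen, Finset.mem_map_equiv, Equiv.sigmaEquivProd_symm_apply, Finset.mem_sigma, Finset.mem_range]
    constructor
    · intro h
      refine ⟨?_, h⟩
      by_contra hc
      rw [rowLen_zero μ i (by omega)] at h; omega
    · exact fun h => h.2
  rw [YoungDiagram.card, this, Finset.card_map, Finset.card_sigma]
  simp

lemma S3_charge (μ : YoungDiagram) (a b c) (h : SS μ = S3 a b c) : a + b + c = -2 ∧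
    2 * (μ.card : ℤ) = (a-b)*(a-b-1) + (b-c)*(b-c-1) + (a-c)*(a-c-1) := by
  classical
  obtain ⟨k, hk⟩ : ∃ k : ℕ, k = μ.rowLen 0 + a.natAbs + b.natAbs + c.natAbs := ⟨_, rfl⟩
  obtain ⟨Q, hQ⟩ : ∃ Q : ℕ, Q = (3*k+2) + μ.colLen 0 + a.natAbs + b.natAbs + c.natAbs + k := ⟨_, rfl⟩
  obtain ⟨N, hN⟩ : ∃ N : ℕ, 3*Q = 3*k+2 + N := ⟨3*Q - (3*k+2), by omega⟩
  have h1 := sumS3 a b c k Q 1 0 (by omega) (by omega) (by omega) (by omega) (by omega) (by omega)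
  have h2 := sumS3 a b c k Q 0 1 (by omega) (by omega) (by omega) (by omega) (by omega) (by omega)
  rw [← h, hN] at h1 h2
  rw [sum_enum μ (3*k+2) N (by omega) (by omega) (fun z => 1 + 0 * z)] at h1
  rw [sum_enum μ (3*k+2) N (by omega) (by omega) (fun z => 0 + 1 * z)] at h2
  simp at h1
  have hN' : (N:ℤ) = 3*Q - 3*k - 2 := by omega
  have hch : a + b + c = -2 := by linarith
  refine ⟨hch, ?_⟩
  have h3 : 2 * ∑ i ∈ Finset.range N, (i:ℤ) = N*(N-1) := by
    have := sumB 0 0 1 N (by omega)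
    simpa using this
  have h4 : (μ.card : ℤ) = ∑ i ∈ Finset.range N, (ff μ i) + ∑ i ∈ Finset.range N, (i:ℤ) := by
    rw [card_eq_sum μ N (by omega), ← Finset.sum_add_distrib]; push_cast
    apply Finset.sum_congr rfl; intro i _; unfold ff; ring
  simp only [zero_add, one_mul] at h2
  rw [h4, mul_add, h2, h3, hN']
  have : c = -2 - a - b := by linarith
  subst this
  ring

lemma exists_diag (a b c : ℤ) (hs : a + b + c = -2) : ∃ μ : YoungDiagram, SS μ = S3 a b c := by
  classical
  obtain ⟨k, hk⟩ : ∃ k : ℕ, k = a.natAbs + b.natAbs + c.natAbs := ⟨_, rfl⟩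
  let P : ℕ → Prop := fun t => ((3*k+2 : ℕ):ℤ) - t ∈ S3 a b c
  have hP : ∀ t, 6*k+6 ≤ t → P t := by
    intro t ht; simp only [P, S3, Set.mem_ofPred_eq]; push_cast; omega
  have hinf : (Set.ofPred P).Infinite := by
    refine Set.infinite_of_forall_exists_gt (fun n => ⟨n + 6*k+6, hP _ (by omega), by omega⟩)
  have hcount : ∀ Q : ℕ, 2*k+2 ≤ Q → Nat.nth P (3*Q - (3*k+2)) = 3*Q := by
    intro Q hQ
    have h1 := sumS3 a b c k Q 1 0 (by omega) (by omega) (by omega) (by omega) (by omega) (by omega)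
    have h2 : (Nat.count P (3*Q) : ℤ) = 3*Q - (3*k+2) := by
      rw [Nat.count_eq_card_filter_range, Finset.card_filter]
      push_cast
      simp only [zero_mul, add_zero] at h1
      change 2 * ∑ t ∈ Finset.range (3*Q), (if P t then (1:ℤ) else 0) = _ at h1
      linarith
    rw [show 3*Q - (3*k+2) = Nat.count P (3*Q) by omega]
    exact Nat.nth_count (hP _ (by omega))
  set h := Nat.nth P with hh
  have hmono : StrictMono h := Nat.nth_strictMono hinf
  have hanti : ∀ i j, i ≤ j → h i + (j - i) ≤ h j := by
    intro i j hij
    obtain ⟨d, rfl⟩ := Nat.exists_eq_add_of_le hij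
    clear hij
    induction d with
    | zero => simp
    | succ d ih => have := hmono (show i + d < i + (d+1) by omega); omega
  have hle : ∀ i, h i ≤ 3*k+2+i := by
    intro i
    have h1 := hcount (i + 3*k+2) (by omega)
    have h2 := hanti i (3*(i+3*k+2) - (3*k+2)) (by omega)
    omega
  have hlarge : ∀ i, 3*k+10 ≤ i → h i = 3*k+2+i := by
    intro i hi
    have h1 := hcount (2*k+2) (by omega)
    have h2 := hanti (3*(2*k+2) - (3*k+2)) i (by omega)
    have := hle i
    omega
  let μ : YoungDiagram :=
    { cells := ((Finset.range (3*k+10)) ×ˢ (Finset.range (6*k+20))).filter (fun x => x.2 + h x.1 < 3*k+2+x.1)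
      isLowerSet := by
        rintro ⟨i, j⟩ ⟨i', j'⟩ hle' hm
        obtain ⟨hi, hj⟩ := Prod.mk_le_mk.mp hle'
        simp only [Finset.coe_filter, Finset.mem_product, Finset.mem_range, Set.mem_ofPred_eq] at *
        have := hanti i' i hi
        omega }
  have hrow : ∀ i, μ.rowLen i = 3*k+2+i - h i := by
    intro i
    have h1 : ∀ j, j < μ.rowLen i ↔ j < 3*k+2+i - h i := by
      intro j
      rw [← YoungDiagram.mem_iff_lt_rowLen, ← YoungDiagram.mem_cells]
      simp only [μ, Finset.mem_filter, Finset.mem_product, Finset.mem_range]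
      have := hlarge i
      have := hle i
      omega
    have h2 := h1 (μ.rowLen i)
    have h3 := h1 (3*k+2+i - h i)
    omega
  refine ⟨μ, ?_⟩
  have hff : ∀ i, ff μ i = ((3*k+2:ℕ):ℤ) - h i := by
    intro i
    have := hle i
    unfold ff; rw [hrow]; omega
  ext z
  constructor
  · rintro ⟨i, rfl⟩
    rw [hff]
    exact Nat.nth_mem_of_infinite hinf i
  · intro hz
    have hz' : z ≤ 3*k+2 := by
      simp only [S3, Set.mem_ofPred_eq] at hz; omega
    have : P ((3*k+2 - z).toNat) := by
      simp only [P]; convert hz using 1; omega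
    have hm : (3*k+2 - z).toNat ∈ Set.range h := by
      rw [hh, Nat.range_nth_of_infinite hinf]; exact this
    obtain ⟨i, hi⟩ := hm
    exact ⟨i, by rw [hff, hi]; omega⟩

lemma S3_inj {a b c a' b' c' : ℤ} (h : S3 a b c = S3 a' b' c') : a = a' ∧ b = b' ∧ c = c' := by
  have H : ∀ z, z ∈ S3 a b c ↔ z ∈ S3 a' b' c' := fun z => by rw [h]
  simp only [S3, Set.mem_ofPred_eq] at H
  refine ⟨?_, ?_, ?_⟩
  · have h1 := (H (3*a)).mp (by omega)
    have h2 := (H (3*a')).mpr (by omega)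
    have h1 := h1.1 (by omega)
    have h2 := h2.1 (by omega)
    omega
  · have h1 := (H (3*b+1)).mp (by omega)
    have h2 := (H (3*b'+1)).mpr (by omega)
    have h1 := h1.2.1 (by omega)
    have h2 := h2.2.1 (by omega)
    omega
  · have h1 := (H (3*c+2)).mp (by omega)
    have h2 := (H (3*c'+2)).mpr (by omega)
    have h1 := h1.2.2 (by omega)
    have h2 := h2.2.2 (by omega)
    omega

noncomputable def dg (x : ℤ × ℤ) : YoungDiagram := (exists_diag x.1 (x.2-1) (-1-x.1-x.2) (by ring)).choose

lemma dg_spec (x : ℤ × ℤ) : SS (dg x) = S3 x.1 (x.2-1) (-1-x.1-x.2) :=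
  (exists_diag x.1 (x.2-1) (-1-x.1-x.2) (by ring)).choose_spec

lemma dg_card (x : ℤ × ℤ) : ((dg x).card : ℤ) = 3*x.1^2+3*x.1*x.2+3*x.2^2+x.1-x.2 := by
  have := (S3_charge _ _ _ _ (dg_spec x)).2
  linarith

lemma dg_core (x : ℤ × ℤ) : (dg x).IsThreeCore := S3_core _ _ _ _ (dg_spec x)

lemma dg_inj : Function.Injective dg := by
  intro x y h
  have := dg_spec x
  rw [h, dg_spec y] at this
  obtain ⟨h1, h2, _⟩ := S3_inj this
  ext <;> omega

lemma dg_surj (μ : YoungDiagram) (h : μ.IsThreeCore) : ∃ x, dg x = μ := by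
  obtain ⟨a, b, c, habc⟩ := core_S3 μ h
  have := (S3_charge _ _ _ _ habc).1
  refine ⟨(a, b+1), SS_inj ?_⟩
  rw [dg_spec, habc]
  congr 1 <;> simp <;> omega

open Classical in
lemma A3_eq (n : ℕ) : A3 n = ((sph (3*n+2)).filter (fun x => (x.re % 3 = 1 ∧ x.imI % 3 = 1) ∧ (x.imJ % 3 = 1 ∧ x.imK % 3 = 1))).card := by
  rw [A3]
  symm
  rw [← Nat.card_eq_finsetCard]
  have key : ∀ x : HQ, x.re % 3 = 1 → x.imI % 3 = 1 → x.imJ % 3 = 1 → x.imK % 3 = 1 →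
      (3 * ((dg ((x.re-1)/3, (1-x.imI)/3)).card + (dg ((x.imJ-1)/3, (1-x.imK)/3)).card : ℤ) + 2 = nm x) := by
    intro x h1 h2 h3 h4
    rw [dg_card, dg_card]
    have e1 : x.re = 3 * ((x.re-1)/3) + 1 := by omega
    have e2 : x.imI = 1 - 3 * ((1-x.imI)/3) := by omega
    have e3 : x.imJ = 3 * ((x.imJ-1)/3) + 1 := by omega
    have e4 : x.imK = 1 - 3 * ((1-x.imK)/3) := by omega
    generalize (x.re-1)/3 = u at *
    generalize (1-x.imI)/3 = v at *
    generalize (x.imJ-1)/3 = u' at *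
    generalize (1-x.imK)/3 = v' at *
    rw [nm, e1, e2, e3, e4]; ring
  let F : {x // x ∈ (sph (3*n+2)).filter (fun x => (x.re % 3 = 1 ∧ x.imI % 3 = 1) ∧ (x.imJ % 3 = 1 ∧ x.imK % 3 = 1))} →
    {p : YoungDiagram × YoungDiagram //
    p.1.card + p.2.card = n ∧ p.1.IsThreeCore ∧ p.2.IsThreeCore} := fun x =>
    ⟨(dg ((x.1.re-1)/3, (1-x.1.imI)/3), dg ((x.1.imJ-1)/3, (1-x.1.imK)/3)), by
      obtain ⟨x, hx⟩ := x
      simp only [Finset.mem_filter, mem_sph] at hx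
      obtain ⟨h0, ⟨h1, h2⟩, h3, h4⟩ := hx
      have := key x h1 h2 h3 h4
      exact ⟨by simp only; omega, dg_core _, dg_core _⟩⟩
  refine Nat.card_eq_of_bijective F ⟨?_, ?_⟩
  · rintro ⟨x, hx⟩ ⟨y, hy⟩ h
    simp only [Finset.mem_filter, mem_sph] at hx hy
    simp only [F, Subtype.mk.injEq, Prod.mk.injEq] at h
    obtain ⟨ha, hb⟩ := h
    have ha := dg_inj ha
    have hb := dg_inj hb
    simp only [Prod.mk.injEq] at ha hb
    apply Subtype.ext
    ext <;> simp only <;> omega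
  · rintro ⟨⟨μ, ν⟩, hc, h1, h2⟩
    obtain ⟨⟨u, v⟩, rfl⟩ := dg_surj μ h1
    obtain ⟨⟨u', v'⟩, rfl⟩ := dg_surj ν h2
    have e1 : (3*u+1-1)/3 = u := by omega
    have e2 : (1-(1-3*v))/3 = v := by omega
    have e3 : (3*u'+1-1)/3 = u' := by omega
    have e4 : (1-(1-3*v'))/3 = v' := by omega
    refine ⟨⟨⟨3*u+1, 1-3*v, 3*u'+1, 1-3*v'⟩, ?_⟩, ?_⟩
    · simp only [Finset.mem_filter, mem_sph]
      refine ⟨?_, by omega, by omega⟩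
      rw [← key _ (by simp only; omega) (by simp only; omega) (by simp only; omega) (by simp only; omega)]
      simp only [e1, e2, e3, e4] at *
      omega
    · simp only [F, e1, e2, e3, e4]

open Classical in
lemma six {X : Type*} (T : Finset X) (a b : X → ℤ) (ρ : X → X) (hT : ∀ x ∈ T, ρ x ∈ T) (hi : Function.Injective ρ)
    (ha : ∀ x, a (ρ x) = a x - b x) (hb : ∀ x, b (ρ x) = a x)
    (h1 : ∀ x ∈ T, (a x % 3 = 1 ∧ b x % 3 = 1) ∨ (a x % 3 = 0 ∧ b x % 3 = 1) ∨ (a x % 3 = 2 ∧ b x % 3 = 0) ∨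
      (a x % 3 = 2 ∧ b x % 3 = 2) ∨ (a x % 3 = 0 ∧ b x % 3 = 2) ∨ (a x % 3 = 1 ∧ b x % 3 = 0)) :
    T.card = 6 * (T.filter (fun x => a x % 3 = 1 ∧ b x % 3 = 1)).card := by
  have hle : ∀ i j k : ℤ, (i - j) % 3 = k → (T.filter (fun x => a x % 3 = i ∧ b x % 3 = j)).card ≤
      (T.filter (fun x => a x % 3 = k ∧ b x % 3 = i)).card := by
    intro i j k hk
    refine Finset.card_le_card_of_injOn ρ ?_ hi.injOn
    intro x hx
    simp only [Finset.coe_filter, Set.mem_ofPred_eq] at *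
    refine ⟨hT x hx.1, ?_, ?_⟩
    · rw [ha]; omega
    · rw [hb]; omega
  have l1 := hle 1 1 0 (by norm_num)
  have l2 := hle 0 1 2 (by norm_num)
  have l3 := hle 2 0 2 (by norm_num)
  have l4 := hle 2 2 0 (by norm_num)
  have l5 := hle 0 2 1 (by norm_num)
  have l6 := hle 1 0 1 (by norm_num)
  have hs : T.card = (T.filter (fun x => a x % 3 = 1 ∧ b x % 3 = 1)).card + (T.filter (fun x => a x % 3 = 0 ∧ b x % 3 = 1)).card
     + (T.filter (fun x => a x % 3 = 2 ∧ b x % 3 = 0)).card + (T.filter (fun x => a x % 3 = 2 ∧ b x % 3 = 2)).card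
     + (T.filter (fun x => a x % 3 = 0 ∧ b x % 3 = 2)).card + (T.filter (fun x => a x % 3 = 1 ∧ b x % 3 = 0)).card := by
    simp only [Finset.card_filter]
    rw [Finset.card_eq_sum_ones]
    simp only [← Finset.sum_add_distrib]
    apply Finset.sum_congr rfl
    intro x hx
    rcases h1 x hx with h | h | h | h | h | h <;> simp [h.1, h.2]
  omega

lemma form_mod (a b : ℤ) : ((a^2-a*b+b^2) % 3 = 0) ∨ ((a^2-a*b+b^2) % 3 = 1 ∧ ((a % 3 = 1 ∧ b % 3 = 1) ∨ (a % 3 = 0 ∧ b % 3 = 1) ∨ (a % 3 = 2 ∧ b % 3 = 0) ∨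
      (a % 3 = 2 ∧ b % 3 = 2) ∨ (a % 3 = 0 ∧ b % 3 = 2) ∨ (a % 3 = 1 ∧ b % 3 = 0))) := by
  have h1 : a % 3 = 0 ∨ a % 3 = 1 ∨ a % 3 = 2 := by omega
  have h2 : b % 3 = 0 ∨ b % 3 = 1 ∨ b % 3 = 2 := by omega
  have e : (a^2-a*b+b^2) % 3 = ((a%3)^2-(a%3)*(b%3)+(b%3)^2) % 3 := by
    simp [Int.add_emod, Int.sub_emod, Int.mul_emod, pow_two]
  rw [e]
  rcases h1 with h1 | h1 | h1 <;> rcases h2 with h2 | h2 | h2 <;> rw [h1, h2] <;> simp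

lemma A3_r (n : ℕ) : r (3*n+2) = 36 * A3 n := by
  classical
  have hm : ∀ x ∈ sph (3*n+2), (x.re^2-x.re*x.imI+x.imI^2 + (x.imJ^2-x.imJ*x.imK+x.imK^2)) % 3 = 2 := by
    intro x hx
    rw [mem_sph, nm] at hx
    omega
  have s1 := six (sph (3*n+2)) (fun x => x.re) (fun x => x.imI) (fun x => ⟨x.re - x.imI, x.re, x.imJ, x.imK⟩)
    (by intro x hx; rw [mem_sph] at *; rw [← hx]; simp only [nm]; ring)
    (by intro x y h; simp only [QuaternionAlgebra.mk.injEq] at h; ext <;> omega)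
    (fun _ => rfl) (fun _ => rfl)
    (by intro x hx
        have := hm x hx
        have h1 := form_mod x.re x.imI
        have h2 := form_mod x.imJ x.imK
        rcases h1 with h1 | h1
        · omega
        · exact h1.2)
  have s2 := six ((sph (3*n+2)).filter (fun x => x.re % 3 = 1 ∧ x.imI % 3 = 1)) (fun x => x.imJ) (fun x => x.imK) (fun x => ⟨x.re, x.imI, x.imJ - x.imK, x.imJ⟩)
    (by intro x hx
        rw [Finset.mem_filter, mem_sph] at *
        refine ⟨?_, hx.2⟩
        rw [← hx.1]; simp only [nm]; ring)
    (by intro x y h; simp only [QuaternionAlgebra.mk.injEq] at h; ext <;> omega)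
    (fun _ => rfl) (fun _ => rfl)
    (by intro x hx
        have := hm x (Finset.mem_filter.mp hx).1
        have h1 := form_mod x.re x.imI
        have h2 := form_mod x.imJ x.imK
        rcases h2 with h2 | h2
        · omega
        · exact h2.2)
  rw [Finset.filter_filter] at s2
  rw [A3_eq, r, s1, s2]; ring

end A3aux

/-- For a prime p ≡ 1 (mod 3) with p ∤ 3n+2:
(p−1)·A₃(pᵏn + (2pᵏ−2)/3) = (p^{k+1}−1)·A₃(n). -/
theorem A3_mult_one_mod_three (p k n : ℕ) (hp : p.Prime) (hp3 : p % 3 = 1)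
    (hpn : ¬ p ∣ 3 * n + 2) :
    (p - 1) * A3 (p ^ k * n + (2 * p ^ k - 2) / 3) = (p ^ (k + 1) - 1) * A3 n := by
  have h3 : p ^ k % 3 = 1 := by
    rw [Nat.pow_mod, hp3]; simp
  have hpos : 0 < p := hp.pos
  have hm : (3 * ((p ^ k * n + (2 * p ^ k - 2) / 3 : ℕ) : ℤ) + 2) = (p:ℤ)^k * (3*n+2) := by
    have h4 : 3 * ((2 * p ^ k - 2) / 3) + 2 = 2 * p^k := by omega
    have h5 : 3 * (p ^ k * n + (2 * p ^ k - 2) / 3) + 2 = p^k * (3*n+2) := by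
      rw [mul_add, add_assoc, h4]; ring
    exact_mod_cast h5
  have hnd : ¬ (p:ℤ) ∣ 3 * n + 2 := by
    intro h; exact hpn (by exact_mod_cast h)
  have h6 := A3aux.r_pow p hp hp3 (3*n+2) hnd k
  rw [← hm, A3aux.A3_r, A3aux.A3_r] at h6
  have h7 : 1 ≤ p ^ (k+1) := Nat.one_le_pow _ _ hpos
  zify [hp.one_le, h7]
  push_cast at h6 ⊢
  linarith
end
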